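/- arXiv:2603.10550 — 2 statements merged into one kernel-verified Lean document; each statement's English description precedes it below -/
import Mathlib

section
/- Let N ≥ 2, s ∈ (0,1), and let Ω ⊂ ℝ^N be a bounded Lipschitz domain. For every n ≥ 1, μ_n^{(s)}(Ω) = inf over n-dimensional linear subspaces A of H^s(Ω) ∩ L²₀(Ω) of sup_{u ∈ A, u≠0} (c_{N,s}/2)[ũ]²_{H^s_{Ω,0}} / ‖u‖²_{L²(Ω)}, where ũ denotes the s-minimal extension of u. -/
open MeasureTheory Filter Topology Bornology Set
open scoped ENNReal NNReal

noncomputable section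

namespace FracNeumann

abbrev Euc (N : ℕ) : Type := EuclideanSpace ℝ (Fin N)

/-- The kernel weight `|x - y| ^ (N + 2s)`. -/
def kern (N : ℕ) (s : ℝ) (x y : Euc N) : ℝ := ‖x - y‖ ^ ((N : ℝ) + 2 * s)

/-- The region `ℝ^{2N} \ (Ω^c × Ω^c)`, where `Ω^c := ℝ^N \ closure Ω`. -/
def reg (N : ℕ) (Ω : Set (Euc N)) : Set (Euc N × Euc N) :=
  {q | q.1 ∈ closure Ω ∨ q.2 ∈ closure Ω}

/-- The squared seminorm `[u]_{H^s_{Ω,0}}²`, as an extended real number. -/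
def semiSq (N : ℕ) (s : ℝ) (Ω : Set (Euc N)) (u : Euc N → ℝ) : ℝ≥0∞ :=
  ∫⁻ q in reg N Ω, ENNReal.ofReal ((u q.1 - u q.2) ^ 2 / kern N s q.1 q.2)

/-- `∫_Ω u²`, as an extended real number. -/
def l2sq (N : ℕ) (Ω : Set (Euc N)) (u : Euc N → ℝ) : ℝ≥0∞ :=
  ∫⁻ x in Ω, ENNReal.ofReal ((u x) ^ 2)

/-- Membership in `H^s_{Ω,0}`. -/
def memHs (N : ℕ) (s : ℝ) (Ω : Set (Euc N)) (u : Euc N → ℝ) : Prop :=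
  Measurable u ∧ l2sq N Ω u < ⊤ ∧ semiSq N s Ω u < ⊤

/-- The squared Gagliardo seminorm `[u]_{H^s(Ω)}²`. -/
def semiSqOn (N : ℕ) (s : ℝ) (Ω : Set (Euc N)) (u : Euc N → ℝ) : ℝ≥0∞ :=
  ∫⁻ q in Ω ×ˢ Ω, ENNReal.ofReal ((u q.1 - u q.2) ^ 2 / kern N s q.1 q.2)

/-- Membership in `H^s(Ω)` (for functions defined on all of `ℝ^N`). -/
def memHsOn (N : ℕ) (s : ℝ) (Ω : Set (Euc N)) (u : Euc N → ℝ) : Prop :=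
  Measurable u ∧ l2sq N Ω u < ⊤ ∧ semiSqOn N s Ω u < ⊤

/-- The normalizing constant `c_{N,s}` of the fractional Laplacian. -/
def cNs (N : ℕ) (s : ℝ) : ℝ :=
  (4 : ℝ) ^ s * s * Real.Gamma ((N : ℝ) / 2 + s) /
    (Real.pi ^ ((N : ℝ) / 2) * Real.Gamma (1 - s))

/-- The nonlocal Neumann derivative `𝒩_s u`. -/
def Nneu (N : ℕ) (s : ℝ) (Ω : Set (Euc N)) (u : Euc N → ℝ) (x : Euc N) : ℝ :=
  cNs N s * ∫ y in Ω, (u x - u y) / kern N s x y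

/-- Membership in `H̃^s_{Ω,0}`: members of `H^s_{Ω,0}` with `𝒩_s u = 0` a.e. in `Ω^c`. -/
def memHsTilde (N : ℕ) (s : ℝ) (Ω : Set (Euc N)) (u : Euc N → ℝ) : Prop :=
  memHs N s Ω u ∧ ∀ᵐ x ∂(volume.restrict (closure Ω)ᶜ), Nneu N s Ω u x = 0

/-- The first nontrivial Neumann eigenvalue `μ₁^{(s)}(Ω)`. -/
def mu1 (N : ℕ) (s : ℝ) (Ω : Set (Euc N)) : ℝ :=
  sInf {t : ℝ | ∃ u : Euc N → ℝ, memHs N s Ω u ∧ (∫ x in Ω, (u x) ^ 2) = 1 ∧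
    (∫ x in Ω, u x) = 0 ∧ t = cNs N s / 2 * (semiSq N s Ω u).toReal}

/-- The bilinear form (without the constant). -/
def bform (N : ℕ) (s : ℝ) (Ω : Set (Euc N)) (u v : Euc N → ℝ) : ℝ :=
  ∫ q in reg N Ω, (u q.1 - u q.2) * (v q.1 - v q.2) / kern N s q.1 q.2

/-- First nontrivial eigenfunction: weak solution associated to `μ₁^{(s)}(Ω)`. -/
def IsFirstEigen (N : ℕ) (s : ℝ) (Ω : Set (Euc N)) (u : Euc N → ℝ) : Prop :=
  memHs N s Ω u ∧ ¬ (u =ᵐ[volume.restrict Ω] 0) ∧ (∫ x in Ω, u x) = 0 ∧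
    ∀ v : Euc N → ℝ, memHs N s Ω v →
      cNs N s / 2 * bform N s Ω u v = mu1 N s Ω * ∫ x in Ω, u x * v x

/-- Reflection `σ_e(x) = x - 2(x·e)e` across the hyperplane `{x·e = 0}`. -/
def reflect (N : ℕ) (e x : Euc N) : Euc N := x - (2 * (inner ℝ x e : ℝ)) • e

/-- The polarization `P_e u` with respect to the hyperplane `{x·e = 0}`. -/
def polarize (N : ℕ) (e : Euc N) (u : Euc N → ℝ) (x : Euc N) : ℝ :=
  if 0 ≤ (inner ℝ x e : ℝ) then min (u x) (u (reflect N e x))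
  else max (u x) (u (reflect N e x))

/-- Foliated Schwarz symmetry with respect to `p`. -/
def FoliatedSchwarz (N : ℕ) (p : Euc N) (u : Euc N → ℝ) : Prop :=
  ∃ uh : ℝ → ℝ → ℝ, (∀ r : ℝ, AntitoneOn (uh r) (Icc 0 Real.pi)) ∧
    ∀ x : Euc N, x ≠ 0 → u x = uh ‖x‖ (Real.arccos ((inner ℝ x p : ℝ) / ‖x‖))

/-- Radial symmetry (pointwise). -/
def Radial (N : ℕ) (u : Euc N → ℝ) : Prop := ∃ f : ℝ → ℝ, ∀ x, u x = f ‖x‖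

/-- Radial symmetry (a.e.). -/
def RadialAE (N : ℕ) (u : Euc N → ℝ) : Prop :=
  ∃ f : ℝ → ℝ, ∀ᵐ x : Euc N ∂volume, u x = f ‖x‖

/-- The set `{x ∈ Ω : u x ≠ 0}` has exactly two connected components. -/
def TwoNodal (N : ℕ) (Ω : Set (Euc N)) (u : Euc N → ℝ) : Prop :=
  Nat.card (ConnectedComponents {x : Euc N // x ∈ Ω ∧ u x ≠ 0}) = 2

/-- Bounded Lipschitz domain: open, bounded, connected, and near every boundary point the set
is the region above the graph of a Lipschitz function in some direction `e`. -/
def IsLipschitzDomain (N : ℕ) (Ω : Set (Euc N)) : Prop :=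
  IsOpen Ω ∧ IsBounded Ω ∧ IsConnected Ω ∧
    ∀ x ∈ frontier Ω, ∃ e : Euc N, ‖e‖ = 1 ∧ ∃ r : ℝ, 0 < r ∧
      ∃ (L : NNReal) (f : Euc N → ℝ), LipschitzWith L f ∧
        ∀ y ∈ Metric.ball x r,
          (y ∈ Ω ↔ f (y - ((inner ℝ y e : ℝ)) • e) < (inner ℝ y e : ℝ))

/-- `g` is a weak gradient of `u` in `Ω`, square-integrable on `Ω`. -/
def IsWeakGradient (N : ℕ) (Ω : Set (Euc N)) (u : Euc N → ℝ) (g : Euc N → Euc N) : Prop :=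
  Measurable g ∧ (∫⁻ x in Ω, ENNReal.ofReal (‖g x‖ ^ 2)) < ⊤ ∧
    ∀ φ : Euc N → ℝ, ContDiff ℝ (⊤ : ℕ∞) φ → HasCompactSupport φ → tsupport φ ⊆ Ω →
      ∀ i : Fin N, (∫ x in Ω, u x * fderiv ℝ φ x (EuclideanSpace.single i 1)) =
        - ∫ x in Ω, g x i * φ x

/-- Membership in `H¹(Ω)`. -/
def memH1 (N : ℕ) (Ω : Set (Euc N)) (u : Euc N → ℝ) : Prop :=
  Measurable u ∧ l2sq N Ω u < ⊤ ∧ ∃ g, IsWeakGradient N Ω u g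

/-- `∫_Ω |∇u|²`, as an extended real number. -/
def gradSq (N : ℕ) (Ω : Set (Euc N)) (u : Euc N → ℝ) : ℝ≥0∞ :=
  ⨅ (g : Euc N → Euc N) (_ : IsWeakGradient N Ω u g), ∫⁻ x in Ω, ENNReal.ofReal (‖g x‖ ^ 2)

/-- Rayleigh quotient for the fractional Neumann problem. -/
def rayleighS (N : ℕ) (s : ℝ) (Ω : Set (Euc N)) (u : Euc N → ℝ) : ℝ≥0∞ :=
  ENNReal.ofReal (cNs N s / 2) * semiSq N s Ω u / l2sq N Ω u

/-- Rayleigh quotient for the local Neumann problem. -/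
def rayleigh1 (N : ℕ) (Ω : Set (Euc N)) (u : Euc N → ℝ) : ℝ≥0∞ :=
  gradSq N Ω u / l2sq N Ω u

/-- The min-max value `μ_n^{(s)}(Ω)` over `n`-dimensional subspaces of `H^s_{Ω,0} ∩ L²₀(Ω)`. -/
def muNs (N : ℕ) (s : ℝ) (Ω : Set (Euc N)) (n : ℕ) : ℝ≥0∞ :=
  ⨅ (A : Submodule ℝ (Euc N → ℝ)) (_ : Module.finrank ℝ A = n ∧
      (∀ u ∈ A, memHs N s Ω u ∧ (∫ x in Ω, u x) = 0) ∧
      (∀ u ∈ A, u =ᵐ[(volume : Measure (Euc N))] 0 → u = 0)),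
    ⨆ (u : Euc N → ℝ) (_ : u ∈ A ∧ u ≠ 0), rayleighS N s Ω u

/-- The min-max value over `n`-dimensional subspaces of `H̃^s_{Ω,0} ∩ L²₀(Ω)`. -/
def muNsTilde (N : ℕ) (s : ℝ) (Ω : Set (Euc N)) (n : ℕ) : ℝ≥0∞ :=
  ⨅ (A : Submodule ℝ (Euc N → ℝ)) (_ : Module.finrank ℝ A = n ∧
      (∀ u ∈ A, memHsTilde N s Ω u ∧ (∫ x in Ω, u x) = 0) ∧
      (∀ u ∈ A, u =ᵐ[(volume : Measure (Euc N))] 0 → u = 0)),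
    ⨆ (u : Euc N → ℝ) (_ : u ∈ A ∧ u ≠ 0), rayleighS N s Ω u

/-- The min-max value `μ_n^{(1)}(Ω)` over `n`-dimensional subspaces of `H¹(Ω) ∩ L²₀(Ω)`. -/
def muN1 (N : ℕ) (Ω : Set (Euc N)) (n : ℕ) : ℝ≥0∞ :=
  ⨅ (A : Submodule ℝ (Euc N → ℝ)) (_ : Module.finrank ℝ A = n ∧
      (∀ u ∈ A, memH1 N Ω u ∧ (∫ x in Ω, u x) = 0) ∧
      (∀ u ∈ A, u =ᵐ[volume.restrict Ω] 0 → u = 0)),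
    ⨆ (u : Euc N → ℝ) (_ : u ∈ A ∧ u ≠ 0), rayleigh1 N Ω u

/-- `μ_n^{(s)}(Ω)` including `μ₀^{(s)}(Ω) := 0`. -/
def muNsFull (N : ℕ) (s : ℝ) (Ω : Set (Euc N)) (n : ℕ) : ℝ≥0∞ :=
  if n = 0 then 0 else muNs N s Ω n

/-- `μ_n^{(1)}(Ω)` including `μ₀^{(1)}(Ω) := 0`. -/
def muN1Full (N : ℕ) (Ω : Set (Euc N)) (n : ℕ) : ℝ≥0∞ :=
  if n = 0 then 0 else muN1 N Ω n

/-- The squared `H^s_{Ω,0}`-seminorm of the `s`-minimal extension of `u`: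
the minimal value of `[v]²` over `v ∈ H^s_{Ω,0}` with `v = u` a.e. in `Ω`. -/
def minExtSemiSq (N : ℕ) (s : ℝ) (Ω : Set (Euc N)) (u : Euc N → ℝ) : ℝ≥0∞ :=
  ⨅ (v : Euc N → ℝ) (_ : memHs N s Ω v ∧ v =ᵐ[volume.restrict Ω] u), semiSq N s Ω v

/-- `ω_{N-1}`: volume of the unit ball of `ℝ^{N-1}`. -/
def omegaPrev (N : ℕ) : ℝ := (volume (Metric.ball (0 : Euc (N - 1)) 1)).toReal

/-- Membership in `L²₀(Ω)`. -/
def memL20 (N : ℕ) (Ω : Set (Euc N)) (u : Euc N → ℝ) : Prop :=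
  Measurable u ∧ l2sq N Ω u < ⊤ ∧ (∫ x in Ω, u x) = 0

/-- The functional `F_s` (value `+∞` outside `H^s(Ω)`). -/
def Fs (N : ℕ) (s : ℝ) (Ω : Set (Euc N)) (u : Euc N → ℝ) : ℝ≥0∞ :=
  ENNReal.ofReal (1 - s) * minExtSemiSq N s Ω u

/-- The functional `F₁` (value `+∞` outside `H¹(Ω)`). -/
def F1 (N : ℕ) (Ω : Set (Euc N)) (u : Euc N → ℝ) : ℝ≥0∞ :=
  ENNReal.ofReal (omegaPrev N / (2 * N)) * gradSq N Ω u

end FracNeumann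
namespace FracNeumann

lemma graph_null (N : ℕ) (e : Euc N) (he : ‖e‖ = 1) (f : Euc N → ℝ) (hf : Continuous f) :
    volume {y : Euc N | f (y - ((inner ℝ y e : ℝ)) • e) = (inner ℝ y e : ℝ)} = 0 := by
  have hee : (inner ℝ e e : ℝ) = 1 := by rw [real_inner_self_eq_norm_sq, he]; norm_num
  refine Measure.addHaar_eq_zero_of_disjoint_translates volume
    (fun n : ℕ => (1 / ((n : ℝ) + 1)) • e) ?_ ?_ ?_
  · refine (Metric.isBounded_closedBall (x := (0 : Euc N)) (r := 1)).subset ?_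
    rintro _ ⟨n, rfl⟩
    simp only [Metric.mem_closedBall, dist_zero_right, norm_smul, he, mul_one, Real.norm_eq_abs]
    have : (0 : ℝ) < (n : ℝ) + 1 := by positivity
    rw [abs_of_pos (by positivity), div_le_one this]
    linarith [(Nat.cast_nonneg n : (0 : ℝ) ≤ n)]
  · intro m n hmn
    refine Set.disjoint_left.2 ?_
    rintro z hz1 hz2
    simp only [Set.singleton_add] at hz1 hz2
    obtain ⟨a, ha, rfl⟩ := hz1
    obtain ⟨b, hb, hab⟩ := hz2
    simp only [Set.mem_ofPred_eq] at ha hb hab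
    apply hmn
    have hb' : b = a + ((1 / ((m : ℝ) + 1)) - (1 / ((n : ℝ) + 1))) • e := by
      rw [sub_smul]
      have : b = (1 / ((m : ℝ) + 1)) • e + a - (1 / ((n : ℝ) + 1)) • e := by
        rw [← hab]; abel
      rw [this]; abel
    generalize hc : (1 / ((m : ℝ) + 1)) - (1 / ((n : ℝ) + 1)) = c at hb'
    have hin : (inner ℝ b e : ℝ) = inner ℝ a e + c := by
      rw [hb', inner_add_left, real_inner_smul_left, hee, mul_one]
    have hpr : b - (inner ℝ b e : ℝ) • e = a - (inner ℝ a e : ℝ) • e := by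
      rw [hin, hb', add_smul]; abel
    rw [hpr, ha, hin] at hb
    have hc0 : c = 0 := by linarith
    rw [hc0, sub_eq_zero] at hc
    have h1 : (0 : ℝ) < (m : ℝ) + 1 := by positivity
    have h2 : (0 : ℝ) < (n : ℝ) + 1 := by positivity
    field_simp at hc
    have : (m : ℝ) = n := by linarith
    exact_mod_cast this
  · apply IsClosed.measurableSet
    exact isClosed_eq (by fun_prop) (by fun_prop)

lemma frontier_null (N : ℕ) (Ω : Set (Euc N)) (hΩ : IsLipschitzDomain N Ω) :
    volume (frontier Ω) = 0 := by
  obtain ⟨ho, -, -, hl⟩ := hΩ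
  refine measure_null_of_locally_null _ ?_
  intro x hx
  obtain ⟨e, he, r, hr, L, f, hf, hy⟩ := hl x hx
  refine ⟨Metric.ball x r ∩ frontier Ω, ?_, ?_⟩
  · rw [Set.inter_comm]
    exact inter_mem self_mem_nhdsWithin (mem_nhdsWithin_of_mem_nhds (Metric.ball_mem_nhds x hr))
  · refine measure_mono_null ?_ (graph_null N e he f hf.continuous)
    rintro y ⟨hyb, hyf⟩
    rw [ho.frontier_eq] at hyf
    have h1 := not_lt.1 fun h => hyf.2 ((hy y hyb).2 h)
    refine le_antisymm ?_ h1
    by_contra h2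
    rw [not_le] at h2
    have hopen : IsOpen {z : Euc N | (inner ℝ z e : ℝ) < f (z - ((inner ℝ z e : ℝ)) • e)} := by
      have := hf.continuous
      exact isOpen_lt (by fun_prop) (by fun_prop)
    have hcl := mem_closure_iff.1 hyf.1 _ (hopen.inter Metric.isOpen_ball) ⟨h2, hyb⟩
    obtain ⟨z, ⟨hz1, hz2⟩, hz3⟩ := hcl
    exact lt_asymm hz1 ((hy z hz2).1 hz3)

lemma restrict_closure (N : ℕ) (Ω : Set (Euc N)) (hΩ : IsLipschitzDomain N Ω) :
    (volume : Measure (Euc N)).restrict (closure Ω) = volume.restrict Ω := by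
  apply Measure.restrict_congr_set
  rw [closure_eq_self_union_frontier]
  exact union_ae_eq_left_of_ae_eq_empty (ae_eq_empty.2 (frontier_null N Ω hΩ))

lemma memLp_of_lintegral {α : Type*} [MeasurableSpace α] (μ : Measure α)
    (u : α → ℝ) (hu : Measurable u) (hu2 : ∫⁻ y, ENNReal.ofReal (u y ^ 2) ∂μ < ⊤) :
    MemLp u 2 μ := by
  rw [memLp_two_iff_integrable_sq hu.aestronglyMeasurable]
  refine ⟨(hu.pow_const 2).aestronglyMeasurable, ?_⟩
  rw [hasFiniteIntegral_iff_ofReal (Eventually.of_forall fun x => sq_nonneg _)]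
  exact hu2

lemma var_min {α : Type*} [MeasurableSpace α] (μ : Measure α) [IsFiniteMeasure μ]
    (u w : α → ℝ) (hu : MemLp u 2 μ) (hw : Measurable w) (M : ℝ)
    (hw0 : ∀ y, 0 ≤ w y) (hwM : ∀ᵐ y ∂μ, w y ≤ M) (t : ℝ) :
    ∫⁻ y, ENNReal.ofReal (((∫ z, u z * w z ∂μ) / (∫ z, w z ∂μ) - u y) ^ 2 * w y) ∂μ ≤
      ∫⁻ y, ENNReal.ofReal ((t - u y) ^ 2 * w y) ∂μ := by
  have hb : ∀ᵐ y ∂μ, ‖w y‖ ≤ M := by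
    filter_upwards [hwM] with y hy
    rwa [Real.norm_eq_abs, abs_of_nonneg (hw0 y)]
  have i0 : Integrable w μ := by
    have := (integrable_const (1 : ℝ) (μ := μ)).mul_bdd hw.aestronglyMeasurable hb
    simpa using this
  have i1 : Integrable (fun y => u y * w y) μ :=
    (hu.integrable (by norm_num)).mul_bdd hw.aestronglyMeasurable hb
  have i2 : Integrable (fun y => u y ^ 2 * w y) μ :=
    hu.integrable_sq.mul_bdd hw.aestronglyMeasurable hb
  have key : ∀ c : ℝ, Integrable (fun y => (c - u y) ^ 2 * w y) μ ∧
      ∫ y, (c - u y) ^ 2 * w y ∂μ =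
        c ^ 2 * (∫ y, w y ∂μ) - 2 * c * (∫ y, u y * w y ∂μ) + ∫ y, u y ^ 2 * w y ∂μ := by
    intro c
    have e : (fun y => (c - u y) ^ 2 * w y) =
        fun y => (c ^ 2 * w y - 2 * c * (u y * w y)) + u y ^ 2 * w y := by
      funext y; ring
    rw [e]
    have j1 : Integrable (fun y => c ^ 2 * w y - 2 * c * (u y * w y)) μ := (i0.const_mul (c ^ 2)).sub (i1.const_mul (2 * c))
    refine ⟨j1.add i2, ?_⟩
    rw [integral_add j1 i2, integral_sub (i0.const_mul (c ^ 2)) (i1.const_mul (2 * c)),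
      integral_const_mul, integral_const_mul]
  rcases eq_or_ne (∫ z, w z ∂μ) 0 with hW | hW
  · have hz := (integral_eq_zero_iff_of_nonneg hw0 i0).1 hW
    refine le_of_eq (lintegral_congr_ae ?_)
    filter_upwards [hz] with y hy
    simp [hy]
  · have hWp : 0 < ∫ z, w z ∂μ := lt_of_le_of_ne (integral_nonneg hw0) (Ne.symm hW)
    set U := ∫ z, u z * w z ∂μ
    set W := ∫ z, w z ∂μ
    rw [← ofReal_integral_eq_lintegral_ofReal (key _).1
        (Eventually.of_forall fun y => mul_nonneg (sq_nonneg _) (hw0 y)),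
      ← ofReal_integral_eq_lintegral_ofReal (key _).1
        (Eventually.of_forall fun y => mul_nonneg (sq_nonneg _) (hw0 y))]
    apply ENNReal.ofReal_le_ofReal
    rw [(key _).2, (key _).2]
    have : t ^ 2 * W - 2 * t * U - ((U / W) ^ 2 * W - 2 * (U / W) * U) = W * (t - U / W) ^ 2 := by
      field_simp; ring
    nlinarith [mul_nonneg hWp.le (sq_nonneg (t - U / W))]

open Classical in
/-- The explicit minimal extension. -/
def ext (N : ℕ) (s : ℝ) (Ω : Set (Euc N)) (u : Euc N → ℝ) (x : Euc N) : ℝ :=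
  if x ∈ closure Ω then u x else
    (∫ y in Ω, u y * (kern N s x y)⁻¹) / (∫ y in Ω, (kern N s x y)⁻¹)

lemma kern_nonneg (N : ℕ) (s : ℝ) (x y : Euc N) : 0 ≤ kern N s x y :=
  Real.rpow_nonneg (norm_nonneg _) _

lemma kern_symm (N : ℕ) (s : ℝ) (x y : Euc N) : kern N s x y = kern N s y x := by
  unfold kern; rw [norm_sub_rev]

lemma kern_meas (N : ℕ) (s : ℝ) : Measurable (fun q : Euc N × Euc N => kern N s q.1 q.2) := by
  unfold kern; fun_prop

lemma kern_inv_meas (N : ℕ) (s : ℝ) (x : Euc N) : Measurable (fun y => (kern N s x y)⁻¹) := by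
  unfold kern; fun_prop

lemma kern_bound (N : ℕ) (s : ℝ) (hs : 0 < s) (Ω : Set (Euc N)) (hne : Ω.Nonempty) (x : Euc N)
    (hx : x ∉ closure Ω) : ∃ M : ℝ, ∀ y ∈ closure Ω, (kern N s x y)⁻¹ ≤ M := by
  have hd : 0 < Metric.infDist x (closure Ω) :=
    (isClosed_closure.notMem_iff_infDist_pos hne.closure).1 hx
  refine ⟨(Metric.infDist x (closure Ω) ^ ((N : ℝ) + 2 * s))⁻¹, fun y hy => ?_⟩
  apply inv_anti₀ (Real.rpow_pos_of_pos hd _)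
  apply Real.rpow_le_rpow hd.le _ (by positivity)
  rw [← dist_eq_norm]
  exact Metric.infDist_le_dist_of_mem hy

lemma ext_meas (N : ℕ) (s : ℝ) (Ω : Set (Euc N)) (u : Euc N → ℝ) (hu : Measurable u) :
    Measurable (ext N s Ω u) := by
  unfold ext
  refine Measurable.ite isClosed_closure.measurableSet hu ?_
  have hk := kern_meas N s
  refine Measurable.div ?_ ?_
  · have : StronglyMeasurable (fun q : Euc N × Euc N => u q.2 * (kern N s q.1 q.2)⁻¹) :=
      ((hu.comp measurable_snd).mul hk.inv).stronglyMeasurable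
    exact this.integral_prod_right'.measurable
  · have : StronglyMeasurable (fun q : Euc N × Euc N => (kern N s q.1 q.2)⁻¹) :=
      hk.inv.stronglyMeasurable
    exact this.integral_prod_right'.measurable

lemma semi_decomp (N : ℕ) (s : ℝ) (Ω : Set (Euc N)) (u : Euc N → ℝ) (hu : Measurable u) :
    semiSq N s Ω u =
      (∫⁻ x in closure Ω, ∫⁻ y in closure Ω, ENNReal.ofReal ((u x - u y) ^ 2 * (kern N s x y)⁻¹)) +
      ((∫⁻ x in (closure Ω)ᶜ, ∫⁻ y in closure Ω,
          ENNReal.ofReal ((u x - u y) ^ 2 * (kern N s x y)⁻¹)) +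
       (∫⁻ x in (closure Ω)ᶜ, ∫⁻ y in closure Ω,
          ENNReal.ofReal ((u x - u y) ^ 2 * (kern N s x y)⁻¹))) := by
  have hk := kern_meas N s
  have hC : MeasurableSet (closure Ω) := isClosed_closure.measurableSet
  have hg : Measurable (fun q : Euc N × Euc N =>
      ENNReal.ofReal ((u q.1 - u q.2) ^ 2 * (kern N s q.1 q.2)⁻¹)) :=
    ((((hu.comp measurable_fst).sub (hu.comp measurable_snd)).pow_const 2).mul hk.inv).ennreal_ofReal
  have hreg : reg N Ω = (closure Ω ×ˢ closure Ω) ∪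
      (((closure Ω)ᶜ ×ˢ closure Ω) ∪ (closure Ω ×ˢ (closure Ω)ᶜ)) := by
    ext q
    simp only [reg, mem_ofPred_eq, mem_union, mem_prod, mem_compl_iff]
    tauto
  unfold semiSq
  simp_rw [div_eq_mul_inv]
  rw [hreg, lintegral_union ((hC.compl.prod hC).union (hC.prod hC.compl)),
    lintegral_union (hC.prod hC.compl), Measure.volume_eq_prod,
    setLIntegral_prod _ hg.aemeasurable, setLIntegral_prod _ hg.aemeasurable,
    setLIntegral_prod_symm _ hg.aemeasurable]
  · congr 3
    funext x
    refine lintegral_congr fun y => ?_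
    simp only
    rw [kern_symm N s y x]
    congr 2
    ring
  · rw [Set.disjoint_left]
    rintro q ⟨h1, h2⟩ ⟨h3, h4⟩
    exact h1 h3
  · rw [Set.disjoint_left]
    rintro q ⟨h1, h2⟩ (⟨h3, h4⟩ | ⟨h3, h4⟩)
    · exact h3 h1
    · exact h4 h2

lemma ext_of_mem (N : ℕ) (s : ℝ) (Ω : Set (Euc N)) (u : Euc N → ℝ) (x : Euc N)
    (hx : x ∈ closure Ω) : ext N s Ω u x = u x := if_pos hx

lemma finite_restrict (N : ℕ) (Ω : Set (Euc N)) (hΩ : IsLipschitzDomain N Ω) :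
    IsFiniteMeasure ((volume : Measure (Euc N)).restrict Ω) :=
  ⟨by rw [Measure.restrict_apply_univ]; exact hΩ.2.1.measure_lt_top⟩

lemma ext_le (N : ℕ) (s : ℝ) (hs : 0 < s) (Ω : Set (Euc N)) (hΩ : IsLipschitzDomain N Ω)
    (u v : Euc N → ℝ) (hu : Measurable u) (hu2 : l2sq N Ω u < ⊤) (hv : Measurable v)
    (huv : v =ᵐ[volume.restrict Ω] u) :
    semiSq N s Ω (ext N s Ω u) ≤ semiSq N s Ω v := by
  have hC : MeasurableSet (closure Ω) := isClosed_closure.measurableSet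
  have hR := restrict_closure N Ω hΩ
  have := finite_restrict N Ω hΩ
  have hcl : ∀ᵐ y ∂((volume : Measure (Euc N)).restrict Ω), y ∈ closure Ω := by
    rw [← hR]; exact ae_restrict_mem hC
  have hE : ∀ᵐ y ∂((volume : Measure (Euc N)).restrict Ω), ext N s Ω u y = u y := by
    filter_upwards [hcl] with y hy
    exact ext_of_mem N s Ω u y hy
  have hout : (∫⁻ x in (closure Ω)ᶜ, ∫⁻ y in closure Ω,
          ENNReal.ofReal ((ext N s Ω u x - ext N s Ω u y) ^ 2 * (kern N s x y)⁻¹)) ≤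
      ∫⁻ x in (closure Ω)ᶜ, ∫⁻ y in closure Ω,
          ENNReal.ofReal ((v x - v y) ^ 2 * (kern N s x y)⁻¹) := by
    refine setLIntegral_mono' hC.compl fun x hx => ?_
    rw [hR]
    have e1 : ∫⁻ y in Ω, ENNReal.ofReal ((ext N s Ω u x - ext N s Ω u y) ^ 2 * (kern N s x y)⁻¹) =
        ∫⁻ y in Ω, ENNReal.ofReal ((ext N s Ω u x - u y) ^ 2 * (kern N s x y)⁻¹) := by
      refine lintegral_congr_ae ?_
      filter_upwards [hE] with y hy
      rw [hy]
    have e2 : ∫⁻ y in Ω, ENNReal.ofReal ((v x - v y) ^ 2 * (kern N s x y)⁻¹) =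
        ∫⁻ y in Ω, ENNReal.ofReal ((v x - u y) ^ 2 * (kern N s x y)⁻¹) := by
      refine lintegral_congr_ae ?_
      filter_upwards [huv] with y hy
      rw [hy]
    rw [e1, e2]
    have e3 : ext N s Ω u x =
      (∫ y in Ω, u y * (kern N s x y)⁻¹) / (∫ y in Ω, (kern N s x y)⁻¹) := if_neg hx
    rw [e3]
    obtain ⟨M, hM⟩ := kern_bound N s hs Ω hΩ.2.2.1.nonempty x hx
    refine var_min _ u (fun y => (kern N s x y)⁻¹) (memLp_of_lintegral _ u hu hu2)
      (kern_inv_meas N s x) M (fun y => inv_nonneg.2 (kern_nonneg N s x y)) ?_ (v x)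
    filter_upwards [hcl] with y hy
    exact hM y hy
  rw [semi_decomp N s Ω _ (ext_meas N s Ω u hu), semi_decomp N s Ω v hv]
  refine add_le_add (le_of_eq ?_) (add_le_add hout hout)
  rw [hR]
  refine lintegral_congr_ae ?_
  filter_upwards [hE, huv] with x hx hx'
  refine lintegral_congr_ae ?_
  filter_upwards [hE, huv] with y hy hy'
  rw [hx, hx', hy, hy']

lemma int_mul (N : ℕ) (s : ℝ) (hs : 0 < s) (Ω : Set (Euc N)) (hΩ : IsLipschitzDomain N Ω)
    (u : Euc N → ℝ) (hu : Measurable u) (hu2 : l2sq N Ω u < ⊤) (x : Euc N) (hx : x ∉ closure Ω) :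
    Integrable (fun y => u y * (kern N s x y)⁻¹) (volume.restrict Ω) := by
  have := finite_restrict N Ω hΩ
  obtain ⟨M, hM⟩ := kern_bound N s hs Ω hΩ.2.2.1.nonempty x hx
  refine ((memLp_of_lintegral _ u hu hu2).integrable (by norm_num)).mul_bdd (c := M)
    (kern_inv_meas N s x).aestronglyMeasurable ?_
  filter_upwards [ae_restrict_mem hΩ.1.measurableSet] with y hy
  rw [Real.norm_eq_abs, abs_of_nonneg (inv_nonneg.2 (kern_nonneg N s x y))]
  exact hM y (subset_closure hy)

lemma cNs_pos (N : ℕ) (s : ℝ) (hs : s ∈ Set.Ioo (0 : ℝ) 1) : 0 < cNs N s := by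
  have h0 := hs.1
  have h1 : 0 < Real.Gamma ((N : ℝ) / 2 + s) := Real.Gamma_pos_of_pos (by positivity)
  have h2 : 0 < Real.Gamma (1 - s) := Real.Gamma_pos_of_pos (by linarith [hs.2])
  unfold cNs
  have := Real.pi_pos
  positivity

lemma semi_ne_zero (N : ℕ) (hN : 2 ≤ N) (s : ℝ) (Ω : Set (Euc N)) (hΩ : IsLipschitzDomain N Ω)
    (u : Euc N → ℝ) (hu : Measurable u) (h0 : u =ᵐ[volume.restrict Ω] 0)
    (hs0 : semiSq N s Ω u = 0) : u =ᵐ[(volume : Measure (Euc N))] 0 := by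
  have : Nonempty (Fin N) := ⟨⟨0, by omega⟩⟩
  have hk := kern_meas N s
  have hg : Measurable (fun q : Euc N × Euc N =>
      ENNReal.ofReal ((u q.1 - u q.2) ^ 2 / kern N s q.1 q.2)) :=
    ((((hu.comp measurable_fst).sub (hu.comp measurable_snd)).pow_const 2).div hk).ennreal_ofReal
  have h1 : ∫⁻ q in Ω ×ˢ (univ : Set (Euc N)),
      ENNReal.ofReal ((u q.1 - u q.2) ^ 2 / kern N s q.1 q.2) = 0 := by
    refine le_antisymm (le_trans (lintegral_mono_set ?_) hs0.le) bot_le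
    rintro q ⟨hq, -⟩
    exact Or.inl (subset_closure hq)
  rw [lintegral_eq_zero_iff hg, Measure.volume_eq_prod, ← Measure.prod_restrict,
    Measure.restrict_univ] at h1
  have h2 := Measure.ae_ae_of_ae_prod h1
  have : (ae ((volume : Measure (Euc N)).restrict Ω)).NeBot := by
    rw [ae_neBot, Ne, Measure.restrict_eq_zero]
    exact (hΩ.1.measure_pos volume hΩ.2.2.1.nonempty).ne'
  obtain ⟨x, hx1, hx2⟩ := (h2.and h0).exists
  have hne : ∀ᵐ y ∂(volume : Measure (Euc N)), y ≠ x := by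
    rw [ae_iff]; simp
  filter_upwards [hx1, hne] with y hy hyx
  have hkp : 0 < kern N s x y := Real.rpow_pos_of_pos (norm_pos_iff.2 (sub_ne_zero.2 hyx.symm)) _
  simp only [Pi.zero_apply, ENNReal.ofReal_eq_zero] at hy hx2 ⊢
  rw [hx2, zero_sub, neg_sq, div_le_iff₀ hkp, zero_mul] at hy
  exact pow_eq_zero_iff (two_ne_zero) |>.1 (le_antisymm hy (sq_nonneg _))

/-- The minimal extension as a linear map on a space of square-integrable functions. -/
def extLin (N : ℕ) (s : ℝ) (hs : 0 < s) (Ω : Set (Euc N)) (hΩ : IsLipschitzDomain N Ω)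
    (A : Submodule ℝ (Euc N → ℝ)) (hA : ∀ u ∈ A, Measurable u ∧ l2sq N Ω u < ⊤) :
    A →ₗ[ℝ] (Euc N → ℝ) where
  toFun u := ext N s Ω u
  map_add' u v := by
    funext x
    by_cases hx : x ∈ closure Ω
    · simp [ext, hx]
    · have h1 := int_mul N s hs Ω hΩ _ (hA u u.2).1 (hA u u.2).2 x hx
      have h2 := int_mul N s hs Ω hΩ _ (hA v v.2).1 (hA v v.2).2 x hx
      simp only [ext, hx, if_false, Submodule.coe_add, Pi.add_apply, add_mul]
      rw [integral_add h1 h2, add_div]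
  map_smul' c u := by
    funext x
    by_cases hx : x ∈ closure Ω
    · simp [ext, hx]
    · simp only [ext, hx, if_false, Submodule.coe_smul, Pi.smul_apply, smul_eq_mul, mul_assoc,
        RingHom.id_apply]
      rw [integral_const_mul, mul_div_assoc]


/-- Corollary 2.8: characterization of `μ_n^{(s)}(Ω)` via `n`-dimensional
subspaces of `H^s(Ω) ∩ L²₀(Ω)` and `s`-minimal extensions. -/
theorem statement5 (N : ℕ) (hN : 2 ≤ N) (s : ℝ) (hs : s ∈ Set.Ioo (0 : ℝ) 1)
    (Ω : Set (Euc N)) (hΩ : IsLipschitzDomain N Ω) (n : ℕ) (hn : 1 ≤ n) :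
    muNs N s Ω n =
      ⨅ (A : Submodule ℝ (Euc N → ℝ)) (_ : Module.finrank ℝ A = n ∧
          (∀ u ∈ A, memHsOn N s Ω u ∧ (∫ x in Ω, u x) = 0) ∧
          (∀ u ∈ A, u =ᵐ[volume.restrict Ω] 0 → u = 0)),
        ⨆ (u : Euc N → ℝ) (_ : u ∈ A ∧ u ≠ 0),
          ENNReal.ofReal (cNs N s / 2) * minExtSemiSq N s Ω u / l2sq N Ω u := by
  have hs0 := hs.1
  have hc : 0 < cNs N s / 2 := by have := cNs_pos N s hs; positivity
  have hc' : ENNReal.ofReal (cNs N s / 2) ≠ 0 := (ENNReal.ofReal_pos.2 hc).ne'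
  have hcl : ∀ᵐ y ∂((volume : Measure (Euc N)).restrict Ω), y ∈ Ω :=
    ae_restrict_mem hΩ.1.measurableSet
  unfold muNs
  apply le_antisymm
  · refine le_iInf₂ fun A hA => ?_
    obtain ⟨hdim, hmem, hinj⟩ := hA
    by_cases htop : ∃ u ∈ A, minExtSemiSq N s Ω u = ⊤
    · obtain ⟨u, huA, hu⟩ := htop
      have hu0 : u ≠ 0 := by
        rintro rfl
        have hz : minExtSemiSq N s Ω 0 ≤ semiSq N s Ω 0 := by
          refine iInf₂_le (0 : Euc N → ℝ) ⟨⟨measurable_const, ?_, ?_⟩, EventuallyEq.rfl⟩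
          · simp [l2sq]
          · simp [semiSq]
        rw [hu] at hz
        simp [semiSq] at hz
      refine le_trans le_top (le_trans (le_of_eq ?_) (le_iSup₂ u ⟨huA, hu0⟩))
      rw [hu, ENNReal.mul_top hc', ENNReal.top_div_of_ne_top (hmem u huA).1.2.1.ne]
    · push Not at htop
      have hle : ∀ u ∈ A, semiSq N s Ω (ext N s Ω u) ≤ minExtSemiSq N s Ω u := by
        intro u hu
        refine le_iInf₂ fun v hv => ?_
        exact ext_le N s hs0 Ω hΩ u v (hmem u hu).1.1 (hmem u hu).1.2.1 hv.1.1 hv.2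
      have hE : ∀ u, ext N s Ω u =ᵐ[volume.restrict Ω] u := by
        intro u
        filter_upwards [hcl] with y hy
        exact ext_of_mem N s Ω u y (subset_closure hy)
      have hl2 : ∀ u, l2sq N Ω (ext N s Ω u) = l2sq N Ω u := by
        intro u
        refine lintegral_congr_ae ?_
        filter_upwards [hE u] with y hy
        rw [hy]
      let T := extLin N s hs0 Ω hΩ A (fun u hu => ⟨(hmem u hu).1.1, (hmem u hu).1.2.1⟩)
      have hT : ∀ u : A, T u = ext N s Ω u := fun u => rfl
      have hTz : ∀ u : A, T u =ᵐ[volume.restrict Ω] 0 → u = 0 := by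
        intro u hu
        exact Subtype.ext (hinj u u.2 ((hE u).symm.trans hu))
      have hTinj : Function.Injective T := by
        rw [injective_iff_map_eq_zero]
        intro u hu
        exact hTz u (by rw [hu])
      refine le_trans (iInf₂_le (LinearMap.range T) (And.intro ?_ (And.intro ?_ ?_))) ?_
      · rw [LinearMap.finrank_range_of_inj hTinj, hdim]
      · rintro _ ⟨u, rfl⟩
        rw [hT]
        refine ⟨⟨ext_meas N s Ω u (hmem u u.2).1.1, ?_, ?_⟩, ?_⟩
        · rw [hl2]; exact (hmem u u.2).1.2.1
        · exact lt_of_le_of_lt (hle u u.2) (lt_top_iff_ne_top.2 (htop u u.2))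
        · rw [integral_congr_ae (hE u)]; exact (hmem u u.2).2
      · rintro _ ⟨u, rfl⟩ hu
        rw [hTz u (ae_restrict_of_ae hu), map_zero]
      · refine iSup₂_le ?_
        rintro _ ⟨⟨u, rfl⟩, hu⟩
        have hu0 : (u : Euc N → ℝ) ≠ 0 := by
          intro h
          apply hu
          have : u = 0 := Subtype.ext h
          rw [this, map_zero]
        refine le_trans ?_ (le_iSup₂ (u : Euc N → ℝ) ⟨u.2, hu0⟩)
        rw [hT, rayleighS, hl2]
        gcongr
        exact hle u u.2
  · refine le_iInf₂ fun A hA => ?_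
    obtain ⟨hdim, hmem, hinj⟩ := hA
    by_cases hz : ∃ u ∈ A, u =ᵐ[volume.restrict Ω] 0 ∧ u ≠ 0
    · obtain ⟨u, huA, hu, hu0⟩ := hz
      refine le_trans le_top (le_trans (le_of_eq ?_) (le_iSup₂ u ⟨huA, hu0⟩))
      have hl : l2sq N Ω u = 0 := by
        have : l2sq N Ω u = ∫⁻ x in Ω, 0 := by
          refine lintegral_congr_ae ?_
          filter_upwards [hu] with y hy
          simp [hy]
        simpa using this
      have hsemi : semiSq N s Ω u ≠ 0 := fun h =>
        hu0 (hinj u huA (semi_ne_zero N hN s Ω hΩ u (hmem u huA).1.1 hu h))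
      rw [rayleighS, hl, ENNReal.div_zero (mul_ne_zero hc' hsemi)]
    · push Not at hz
      refine le_trans (iInf₂_le A (And.intro hdim (And.intro ?_ hz))) ?_
      · intro u hu
        obtain ⟨⟨h1, h2, h3⟩, h4⟩ := hmem u hu
        refine ⟨⟨h1, h2, lt_of_le_of_lt (lintegral_mono_set ?_) h3⟩, h4⟩
        rintro q ⟨hq, -⟩
        exact Or.inl (subset_closure hq)
      · refine iSup₂_mono fun u hu => ?_
        rw [rayleighS]
        gcongr
        exact iInf₂_le u ⟨(hmem u hu.1).1, EventuallyEq.rfl⟩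

end FracNeumann
end
end

section
/- Let N ≥ 2 and let Ω ⊂ ℝ^N be a bounded Lipschitz domain. Let s₀ ∈ (0,1), and for each s ∈ (s₀,1) let u_s ∈ H^s(Ω) with ∫_Ω u_s dx = 0, and let ũ_s ∈ H^s_{Ω,0} be the s-minimal extension of u_s. Assume there exists C > 0 such that (1−s) ∬_{ℝ^{2N}\(Ω^c×Ω^c)} |ũ_s(x)−ũ_s(y)|²/|x−y|^{N+2s} dx dy ≤ C for every s ∈ (s₀,1). Then there exist an increasing sequence {s_k} ⊂ (s₀,1) with s_k → 1 and a function u ∈ H¹(Ω) with ∫_Ω u dx = 0 such that ‖u_{s_k} − u‖_{L²(Ω)} → 0 as k → ∞. -/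
open MeasureTheory Filter Topology Bornology Set
open scoped ENNReal NNReal

noncomputable section

namespace FracNeumann

/-- Double integral of squared differences over a set of pairs. -/
def DD {N : ℕ} (A : Set (Euc N × Euc N)) (v : Euc N → ℝ) : ℝ≥0∞ :=
  ∫⁻ q in A, ENNReal.ofReal ((v q.1 - v q.2) ^ 2)

/-- Gagliardo energy over a set of pairs. -/
def EE {N : ℕ} (s : ℝ) (A : Set (Euc N × Euc N)) (v : Euc N → ℝ) : ℝ≥0∞ :=
  ∫⁻ q in A, ENNReal.ofReal ((v q.1 - v q.2) ^ 2 / kern N s q.1 q.2)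

/-- Pairs at distance less than `r`. -/
def near (N : ℕ) (r : ℝ) : Set (Euc N × Euc N) := {q | ‖q.1 - q.2‖ < r}

lemma near_open (N : ℕ) (r : ℝ) : IsOpen (near N r) :=
  isOpen_lt (by fun_prop) continuous_const

lemma near_meas (N : ℕ) (r : ℝ) : MeasurableSet (near N r) := (near_open N r).measurableSet

lemma dsq_meas {N : ℕ} {v : Euc N → ℝ} (hv : Measurable v) :
    Measurable (fun q : Euc N × Euc N => ENNReal.ofReal ((v q.1 - v q.2) ^ 2)) := by
  fun_prop

lemma lintegral_affine {N : ℕ} (a : Euc N) {c : ℝ} (hc : 0 < c) (h : Euc N → ℝ≥0∞)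
    (hh : Measurable h) :
    ∫⁻ y, h (a + c • y) = ENNReal.ofReal ((c ^ N)⁻¹) * ∫⁻ y, h y := by
  have h1 : ∫⁻ y, h (a + c • y) = ∫⁻ y, h (a + y) ∂(Measure.map (fun y => c • y) volume) := by
    rw [lintegral_map (by fun_prop) (by fun_prop)]
  rw [h1]
  have h2 := Measure.map_addHaar_smul (volume : Measure (Euc N)) hc.ne'
  have h3 : (fun y : Euc N => c • y) = (c • ·) := rfl
  rw [h3, h2, lintegral_smul_measure, lintegral_add_left_eq_self (μ := volume) h a]
  simp [abs_of_pos hc]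

lemma ofReal_sq_le_two (a b c : ℝ) : ENNReal.ofReal ((a - b) ^ 2) ≤
    2 * ENNReal.ofReal ((a - c) ^ 2) + 2 * ENNReal.ofReal ((b - c) ^ 2) := by
  have h2 : (2 : ℝ≥0∞) = ENNReal.ofReal 2 := by simp
  rw [h2, ← ENNReal.ofReal_mul (by norm_num), ← ENNReal.ofReal_mul (by norm_num),
    ← ENNReal.ofReal_add (by positivity) (by positivity)]
  apply ENNReal.ofReal_le_ofReal
  nlinarith [sq_nonneg (a - c + (b - c))]

/-- A set of pairs stable under swapping and under taking midpoints. -/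
structure MidStable {N : ℕ} (Z : Set (Euc N × Euc N)) : Prop where
  meas : MeasurableSet Z
  swap : ∀ x y, (x, y) ∈ Z → (y, x) ∈ Z
  mid : ∀ x y, (x, y) ∈ Z → (x, (1 / 2 : ℝ) • x + (1 / 2 : ℝ) • y) ∈ Z

lemma DD_mid {N : ℕ} {Z : Set (Euc N × Euc N)} (hZ : MidStable Z) {v : Euc N → ℝ}
    (hv : Measurable v) (r : ℝ) :
    DD (Z ∩ near N r) v ≤ 2 ^ (N + 2) * DD (Z ∩ near N (r / 2)) v := by
  set m : Euc N × Euc N → Euc N := fun q => (1 / 2 : ℝ) • q.1 + (1 / 2 : ℝ) • q.2 with hm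
  have hmm : Measurable m := by fun_prop
  have hA : MeasurableSet (Z ∩ near N r) := hZ.meas.inter (near_meas N r)
  have hA2 : MeasurableSet (Z ∩ near N (r / 2)) := hZ.meas.inter (near_meas N _)
  set I : ℝ≥0∞ := ∫⁻ q in Z ∩ near N r, ENNReal.ofReal ((v q.1 - v (m q)) ^ 2) with hI
  have hswap : ∫⁻ q in Z ∩ near N r, ENNReal.ofReal ((v q.2 - v (m q)) ^ 2) = I := by
    have hp : MeasurePreserving (Prod.swap : Euc N × Euc N → Euc N × Euc N) volume volume := by
      rw [Measure.volume_eq_prod]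
      exact Measure.measurePreserving_swap
    have := hp.setLIntegral_comp_preimage hA
      (f := fun q => ENNReal.ofReal ((v q.1 - v (m q)) ^ 2)) (by fun_prop)
    rw [hI, ← this]
    have e : Prod.swap ⁻¹' (Z ∩ near N r) = Z ∩ near N r := by
      ext ⟨x, y⟩
      simp only [mem_preimage, Prod.swap_prod_mk, mem_inter_iff, near, mem_ofPred_eq]
      rw [norm_sub_rev]
      exact and_congr_left fun _ => ⟨hZ.swap _ _, hZ.swap _ _⟩
    rw [e]
    apply lintegral_congr
    rintro ⟨x, y⟩
    simp [m, add_comm]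
  have hI2 : I ≤ 2 ^ N * DD (Z ∩ near N (r / 2)) v := by
    have h1 : I ≤ ∫⁻ q : Euc N × Euc N, (Z ∩ near N (r / 2)).indicator
        (fun q => ENNReal.ofReal ((v q.1 - v q.2) ^ 2)) (q.1, m q) := by
      rw [hI, ← lintegral_indicator hA]
      apply lintegral_mono
      rintro ⟨x, y⟩
      by_cases hq : (x, y) ∈ Z ∩ near N r
      · rw [indicator_of_mem hq]
        show _ ≤ (Z ∩ near N (r / 2)).indicator _ (x, m (x, y))
        rw [indicator_of_mem]
        refine ⟨hZ.mid x y hq.1, ?_⟩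
        have h2 : ‖x - y‖ < r := hq.2
        simp only [near, mem_ofPred_eq, m]
        have : x - ((1 / 2 : ℝ) • x + (1 / 2 : ℝ) • y) = (1 / 2 : ℝ) • (x - y) := by module
        rw [this, norm_smul]
        norm_num
        linarith
      · rw [indicator_of_notMem hq]
        exact zero_le
    refine h1.trans (le_of_eq ?_)
    have hind : Measurable ((Z ∩ near N (r / 2)).indicator
        (fun q : Euc N × Euc N => ENNReal.ofReal ((v q.1 - v q.2) ^ 2))) :=
      (dsq_meas hv).indicator hA2
    rw [DD, ← lintegral_indicator hA2, Measure.volume_eq_prod,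
      lintegral_prod _ (by fun_prop), lintegral_prod _ hind.aemeasurable,
      ← lintegral_const_mul _ hind.lintegral_prod_right']
    apply lintegral_congr
    intro x
    have := lintegral_affine ((1 / 2 : ℝ) • x) (c := 1 / 2) (by norm_num)
      (fun y => (Z ∩ near N (r / 2)).indicator
        (fun q : Euc N × Euc N => ENNReal.ofReal ((v q.1 - v q.2) ^ 2)) (x, y)) (by fun_prop)
    simp only [hm] at this ⊢
    rw [this]
    congr 1
    rw [← inv_pow, ENNReal.ofReal_pow (by norm_num)]
    norm_num
  calc DD (Z ∩ near N r) v ≤ ∫⁻ q in Z ∩ near N r,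
        (2 * ENNReal.ofReal ((v q.1 - v (m q)) ^ 2) + 2 * ENNReal.ofReal ((v q.2 - v (m q)) ^ 2)) :=
        lintegral_mono fun q => ofReal_sq_le_two _ _ _
    _ = 2 * I + 2 * I := by
        rw [lintegral_add_left (by fun_prop), lintegral_const_mul _ (by fun_prop),
          lintegral_const_mul _ (by fun_prop), hswap]
    _ = 4 * I := by rw [← add_mul]; norm_num
    _ ≤ 4 * (2 ^ N * DD (Z ∩ near N (r / 2)) v) := by gcongr
    _ = _ := by rw [← mul_assoc, pow_add, mul_comm (2 ^ N)]; norm_num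

lemma DD_mid_iter {N : ℕ} {Z : Set (Euc N × Euc N)} (hZ : MidStable Z) {v : Euc N → ℝ}
    (hv : Measurable v) (r : ℝ) (k : ℕ) :
    DD (Z ∩ near N r) v ≤ ENNReal.ofReal ((2 ^ (N + 2)) ^ k) * DD (Z ∩ near N (r / 2 ^ k)) v := by
  induction k with
  | zero => simp
  | succ k ih =>
    refine ih.trans ?_
    have := DD_mid hZ hv (r / 2 ^ k)
    rw [pow_succ (2 ^ (N + 2) : ℝ), ENNReal.ofReal_mul (by positivity), mul_assoc]
    gcongr
    refine this.trans (le_of_eq ?_)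
    rw [ENNReal.ofReal_pow (by norm_num), div_div, ← pow_succ]
    norm_num

/-- geometric sum bound -/
lemma geo_aux {p r : ℝ} (hp : 1 ≤ p) (hr : 0 < r) (K : ℕ) :
    ∑ k ∈ Finset.range (K + 1), (r / 2 ^ k) ^ (-p) ≤ 2 * (r / 2 ^ K) ^ (-p) := by
  induction K with
  | zero => 
    have : 0 < r ^ (-p) := by positivity
    simp; linarith
  | succ K ih =>
    rw [Finset.sum_range_succ]
    have h1 : (r / 2 ^ (K + 1)) ^ (-p) = 2 ^ p * (r / 2 ^ K) ^ (-p) := by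
      have : r / 2 ^ (K + 1) = (r / 2 ^ K) * 2⁻¹ := by rw [pow_succ]; field_simp
      rw [this, Real.mul_rpow (by positivity) (by positivity), Real.inv_rpow (by norm_num),
        Real.rpow_neg (by norm_num : (0:ℝ) ≤ 2) p, inv_inv, mul_comm]
    have h2 : (2 : ℝ) ≤ 2 ^ p := by
      calc (2 : ℝ) = 2 ^ (1 : ℝ) := by simp
        _ ≤ 2 ^ p := Real.rpow_le_rpow_of_exponent_le (by norm_num) hp
    have h3 : 0 < (r / 2 ^ K) ^ (-p) := by positivity
    rw [h1]
    nlinarith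

lemma geo_aux2 {p r d : ℝ} (hp : 1 ≤ p) (hr : 0 < r) (hd : 0 < d) (K : ℕ) :
    ∑ k ∈ Finset.range K, (if d < r / 2 ^ k then (r / 2 ^ k) ^ (-p) else 0) ≤ 2 * d ^ (-p) := by
  induction K with
  | zero => simp; positivity
  | succ K ih =>
    by_cases h : d < r / 2 ^ K
    · calc _ ≤ ∑ k ∈ Finset.range (K + 1), (r / 2 ^ k) ^ (-p) := by
            apply Finset.sum_le_sum
            intro k _
            split_ifs
            · exact le_rfl
            · positivity
        _ ≤ _ := geo_aux hp hr K
        _ ≤ _ := by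
            have := Real.rpow_le_rpow_of_nonpos hd h.le (by linarith : -p ≤ 0)
            linarith
    · rw [Finset.sum_range_succ, if_neg h, add_zero]
      exact ih

/-- Fundamental estimate. -/
lemma DD_le_EE {N : ℕ} (hN : 1 ≤ N) {Z : Set (Euc N × Euc N)} (hZ : MidStable Z) {v : Euc N → ℝ}
    (hv : Measurable v) {r s : ℝ} (hr : 0 < r) (hs : s ∈ Ioo (0 : ℝ) 1) :
    DD (Z ∩ near N r) v ≤
      ENNReal.ofReal (8 * r ^ ((N : ℝ) + 2 * s)) * (ENNReal.ofReal (1 - s) * EE s Z v) := by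
  obtain ⟨hs0, hs1⟩ := hs
  set p : ℝ := (N : ℝ) + 2 * s with hp
  have hN' : (1 : ℝ) ≤ N := by exact_mod_cast hN
  have hp1 : 1 ≤ p := by linarith
  set K : ℕ := ⌈1 / (1 - s)⌉₊ with hK
  have hs' : 0 < 1 - s := by linarith
  have hK1 : 1 / (1 - s) ≤ K := Nat.le_ceil _
  -- upper bound
  have hup : ∑ k ∈ Finset.range K, ENNReal.ofReal ((r / 2 ^ k) ^ (-p)) *
      DD (Z ∩ near N (r / 2 ^ k)) v ≤ 2 * EE s Z v := by
    have e : ∀ k, ENNReal.ofReal ((r / 2 ^ k) ^ (-p)) * DD (Z ∩ near N (r / 2 ^ k)) v =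
        ∫⁻ q in Z, (near N (r / 2 ^ k)).indicator
          (fun q => ENNReal.ofReal ((r / 2 ^ k) ^ (-p)) *
            ENNReal.ofReal ((v q.1 - v q.2) ^ 2)) q := by
      intro k
      rw [setLIntegral_indicator (near_meas N _), lintegral_const_mul _ (dsq_meas hv), DD,
        inter_comm]
    simp_rw [e]
    rw [← lintegral_finsetSum _ (fun k _ => Measurable.indicator (by fun_prop) (near_meas N _)), EE,
      ← lintegral_const_mul]
    · apply lintegral_mono
      rintro ⟨x, y⟩
      by_cases hxy : x = y
      · subst hxy
        simp [indicator]
      have hd : 0 < ‖x - y‖ := norm_pos_iff.mpr (sub_ne_zero.mpr hxy)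
      have := geo_aux2 hp1 hr hd K
      simp only
      calc _ = ENNReal.ofReal ((∑ k ∈ Finset.range K,
            (if ‖x - y‖ < r / 2 ^ k then (r / 2 ^ k) ^ (-p) else 0)) * (v x - v y) ^ 2) := by
            rw [Finset.sum_mul, ENNReal.ofReal_sum_of_nonneg]
            · apply Finset.sum_congr rfl
              intro k _
              by_cases h : ‖x - y‖ < r / 2 ^ k
              · rw [indicator_of_mem (by exact h), if_pos h, ENNReal.ofReal_mul (by positivity)]
              · rw [indicator_of_notMem (by exact h), if_neg h]; simp
            · intro k _
              split_ifs <;> positivity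
        _ ≤ ENNReal.ofReal (2 * ‖x - y‖ ^ (-p) * (v x - v y) ^ 2) := by gcongr
        _ = _ := by
            rw [mul_assoc, ENNReal.ofReal_mul (by norm_num), kern, Real.rpow_neg hd.le,
              div_eq_inv_mul]
            simp
            rfl
    · unfold kern; fun_prop
  -- lower bound
  have hlow : ∀ k ∈ Finset.range K, ENNReal.ofReal (r ^ (-p) / 4) * DD (Z ∩ near N r) v ≤
      ENNReal.ofReal ((r / 2 ^ k) ^ (-p)) * DD (Z ∩ near N (r / 2 ^ k)) v := by
    intro k hk
    have hk1 : (k : ℝ) * (1 - s) ≤ 1 := by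
      have : (k : ℝ) < 1 / (1 - s) := Nat.lt_ceil.mp (Finset.mem_range.mp hk)
      rw [lt_div_iff₀ hs'] at this
      exact this.le
    calc _ ≤ ENNReal.ofReal (r ^ (-p) / 4) * (ENNReal.ofReal ((2 ^ (N + 2)) ^ k) *
            DD (Z ∩ near N (r / 2 ^ k)) v) := by gcongr; exact DD_mid_iter hZ hv r k
      _ = ENNReal.ofReal (r ^ (-p) / 4 * (2 ^ (N + 2)) ^ k) * DD (Z ∩ near N (r / 2 ^ k)) v := by
          rw [← mul_assoc, ENNReal.ofReal_mul (by positivity)]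
      _ ≤ _ := by
          gcongr
          rw [Real.div_rpow hr.le (by positivity), Real.rpow_neg (by positivity) p,
            div_mul_eq_mul_div, Real.rpow_neg (by positivity) p, div_inv_eq_mul, mul_div_assoc]
          gcongr
          rw [div_le_iff₀ (by norm_num), ← pow_mul, ← Real.rpow_natCast, ← Real.rpow_natCast,
            ← Real.rpow_mul (by norm_num), show (4 : ℝ) = 2 ^ (2 : ℝ) by norm_num,
            ← Real.rpow_add (by norm_num)]
          apply Real.rpow_le_rpow_of_exponent_le (by norm_num)
          push_cast
          rw [hp]
          nlinarith
  have hsum := Finset.sum_le_sum hlow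
  rw [Finset.sum_const, Finset.card_range, nsmul_eq_mul] at hsum
  have h3 := hsum.trans hup
  have h4 : ENNReal.ofReal ((1 / (1 - s)) * (r ^ (-p) / 4)) * DD (Z ∩ near N r) v ≤
      2 * EE s Z v := by
    refine le_trans ?_ h3
    rw [← mul_assoc, ENNReal.ofReal_mul (by positivity)]
    gcongr
    calc ENNReal.ofReal (1 / (1 - s)) ≤ ENNReal.ofReal (K : ℝ) := by gcongr
      _ = _ := by simp
  calc DD (Z ∩ near N r) v = ENNReal.ofReal (4 * r ^ p * (1 - s)) *
        (ENNReal.ofReal ((1 / (1 - s)) * (r ^ (-p) / 4)) * DD (Z ∩ near N r) v) := by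
        rw [← mul_assoc, ← ENNReal.ofReal_mul (by positivity)]
        have : 4 * r ^ p * (1 - s) * (1 / (1 - s) * (r ^ (-p) / 4)) = 1 := by
          rw [Real.rpow_neg hr.le]
          have : 0 < r ^ p := by positivity
          field_simp
        rw [this]; simp
    _ ≤ ENNReal.ofReal (4 * r ^ p * (1 - s)) * (2 * EE s Z v) := by gcongr
    _ = _ := by
        rw [← mul_assoc, ← mul_assoc, ← ENNReal.ofReal_mul (by positivity),
          show (2 : ℝ≥0∞) = ENNReal.ofReal 2 by simp, ← ENNReal.ofReal_mul (by positivity)]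
        congr 2
        ring

end FracNeumann

namespace FracNeumann

lemma jensen_sq {α : Type*} [MeasurableSpace α] (μ : Measure α) [IsFiniteMeasure μ] {f : α → ℝ}
    (hf : Integrable f μ) (c : ℝ) :
    μ univ * ENNReal.ofReal ((c - ⨍ x, f x ∂μ) ^ 2) ≤ ∫⁻ x, ENNReal.ofReal ((c - f x) ^ 2) ∂μ := by
  by_cases hμ : μ = 0
  · simp [hμ]
  by_cases htop : ∫⁻ x, ENNReal.ofReal ((c - f x) ^ 2) ∂μ = ⊤
  · rw [htop]; exact le_top
  have : NeZero μ := ⟨hμ⟩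
  have hmeas : AEStronglyMeasurable (fun x => (c - f x) ^ 2) μ :=
    (aestronglyMeasurable_const.sub hf.1).pow 2
  have hint : Integrable (fun x => (c - f x) ^ 2) μ :=
    ⟨hmeas, by
      rw [hasFiniteIntegral_iff_ofReal (Eventually.of_forall fun x => sq_nonneg _)]
      exact lt_top_iff_ne_top.mpr htop⟩
  have hconv : ConvexOn ℝ univ (fun t : ℝ => (c - t) ^ 2) := by
    refine ⟨convex_univ, ?_⟩
    intro x _ y _ a b ha hb hab
    simp only [smul_eq_mul]
    have : b = 1 - a := by linarith
    subst this
    nlinarith [mul_nonneg (mul_nonneg ha hb) (sq_nonneg (x - y))]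
  have h1 := hconv.map_average_le (by fun_prop) isClosed_univ (by simp) hf
    (by simpa [Function.comp_def] using hint)
  rw [← ofReal_integral_eq_lintegral_ofReal hint (Eventually.of_forall fun x => sq_nonneg _)]
  have h2 : ∫ x, (c - f x) ^ 2 ∂μ = μ.real univ * ⨍ x, (c - f x) ^ 2 ∂μ := by
    rw [average_eq, smul_eq_mul, mul_inv_cancel_left₀]
    exact (measureReal_ne_zero_iff (measure_ne_top μ _)).mpr (by simpa using hμ)
  rw [h2, ENNReal.ofReal_mul measureReal_nonneg, ofReal_measureReal]
  gcongr

/-- Average of `f` over the copy of `B` contracted towards `y`. -/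
def av {N : ℕ} (B : Set (Euc N)) (δ : ℝ) (y : Euc N) (f : Euc N → ℝ) : ℝ :=
  ⨍ z in B, f ((1 - δ) • y + δ • z)

lemma aff_mem {N : ℕ} {B : Set (Euc N)} (hB : Convex ℝ B) {δ : ℝ} (h0 : 0 < δ) (h1 : δ ≤ 1)
    {y z : Euc N} (hy : y ∈ B) (hz : z ∈ B) : (1 - δ) • y + δ • z ∈ B :=
  hB hy hz (by linarith) h0.le (by ring)

lemma av_integrable {N : ℕ} {B : Set (Euc N)} (hB : Convex ℝ B) (hBm : MeasurableSet B)
    {δ : ℝ} (h0 : 0 < δ) (h1 : δ ≤ 1)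
    {y : Euc N} (hy : y ∈ B) {f : Euc N → ℝ} (hf : IntegrableOn f B) :
    IntegrableOn (fun z => f ((1 - δ) • y + δ • z)) B := by
  have h : Integrable (B.indicator f) := (integrable_indicator_iff hBm).mpr hf
  have h2 := (h.comp_add_left ((1 - δ) • y)).comp_smul h0.ne'
  refine (h2.integrableOn (s := B)).congr_fun ?_ hBm
  intro z hz
  simp only
  rw [indicator_of_mem (aff_mem hB h0 h1 hy hz)]

lemma av_sub {N : ℕ} {B : Set (Euc N)} (hB : Convex ℝ B) (hBm : MeasurableSet B)
    {δ : ℝ} (h0 : 0 < δ) (h1 : δ ≤ 1)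
    {y : Euc N} (hy : y ∈ B) {f g : Euc N → ℝ} (hf : IntegrableOn f B) (hg : IntegrableOn g B) :
    av B δ y (fun x => f x - g x) = av B δ y f - av B δ y g := by
  unfold av
  rw [average_eq, average_eq, average_eq,
    integral_sub (av_integrable hB hBm h0 h1 hy hf) (av_integrable hB hBm h0 h1 hy hg), smul_sub]

/-- Deviation from the averages chosen by `j`. -/
def dev {N : ℕ} (B : Set (Euc N)) (δ : ℝ) (j : SimpleFunc (Euc N) (Euc N)) (f : Euc N → ℝ) :
    ℝ≥0∞ := ∫⁻ x in B, ENNReal.ofReal ((f x - av B δ (j x) f) ^ 2)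

lemma prodset_midStable {N : ℕ} {B : Set (Euc N)} (hB : Convex ℝ B) (hBm : MeasurableSet B) :
    MidStable (B ×ˢ B) where
  meas := hBm.prod hBm
  swap := fun _ _ h => ⟨h.2, h.1⟩
  mid := fun _ _ h => ⟨h.1, hB h.1 h.2 (by norm_num) (by norm_num) (by norm_num)⟩

lemma dev_le {N : ℕ} {B : Set (Euc N)} (hB : Convex ℝ B) (hBm : MeasurableSet B)
    (hBf : volume B ≠ ⊤) {δ : ℝ} (h0 : 0 < δ) (h1 : δ ≤ 1) (j : SimpleFunc (Euc N) (Euc N))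
    (hj : ∀ x, j x ∈ B) {ρ : ℝ}
    (hρ : ∀ x ∈ B, ∀ z ∈ B, ‖x - ((1 - δ) • j x + δ • z)‖ < ρ)
    {f : Euc N → ℝ} (hfm : Measurable f) (hf : IntegrableOn f B) :
    volume B * dev B δ j f ≤ ENNReal.ofReal ((δ ^ N)⁻¹) * DD (B ×ˢ B ∩ near N ρ) f := by
  have hfin : IsFiniteMeasure (volume.restrict B) := ⟨by simpa using hBf.lt_top⟩
  have hA : MeasurableSet (B ×ˢ B ∩ near N ρ) := (hBm.prod hBm).inter (near_meas N ρ)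
  set F := (B ×ˢ B ∩ near N ρ).indicator
        (fun q : Euc N × Euc N => ENNReal.ofReal ((f q.1 - f q.2) ^ 2)) with hF
  have hFm : Measurable F := (dsq_meas hfm).indicator hA
  have hav : Measurable fun x => av B δ (j x) f := (j.map fun y => av B δ y f).measurable
  rw [DD, ← lintegral_indicator hA, dev, Measure.volume_eq_prod,
    lintegral_prod _ hFm.aemeasurable,
    ← lintegral_const_mul _ hFm.lintegral_prod_right', ← lintegral_const_mul _ (by fun_prop)]
  refine le_trans ?_ (setLIntegral_le_lintegral B _)
  apply setLIntegral_mono' hBm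
  intro x hx
  have hje := jensen_sq (volume.restrict B) (av_integrable hB hBm h0 h1 (hj x) hf) (f x)
  rw [Measure.restrict_apply_univ] at hje
  refine hje.trans ?_
  rw [← lintegral_affine ((1 - δ) • j x) h0 (fun y => F (x, y)) (by fun_prop)]
  refine le_trans ?_ (setLIntegral_le_lintegral B _)
  apply setLIntegral_mono' hBm
  intro z hz
  rw [hF, indicator_of_mem]
  exact ⟨⟨hx, aff_mem hB h0 h1 (hj x) hz⟩, hρ x hx z hz⟩

lemma av_diff_le {N : ℕ} {B : Set (Euc N)} (hB : Convex ℝ B) (hBm : MeasurableSet B)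
    (hBf : volume B ≠ ⊤) {δ : ℝ} (h0 : 0 < δ) (h1 : δ ≤ 1) {ρ : ℝ}
    (hρ : ∀ x ∈ B, ∀ z ∈ B, ‖x - z‖ < ρ) {x y : Euc N} (hx : x ∈ B) (hy : y ∈ B)
    {f : Euc N → ℝ} (hfm : Measurable f) (hf : IntegrableOn f B) :
    volume B * (volume B * ENNReal.ofReal ((av B δ x f - av B δ y f) ^ 2)) ≤
      4 * (ENNReal.ofReal ((δ ^ N)⁻¹) * DD (B ×ˢ B ∩ near N ρ) f) := by
  have key : ∀ y ∈ B, volume B * dev B δ (SimpleFunc.const _ y) f ≤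
      ENNReal.ofReal ((δ ^ N)⁻¹) * DD (B ×ˢ B ∩ near N ρ) f := fun y hy =>
    dev_le hB hBm hBf h0 h1 _ (fun _ => hy)
      (fun x hx z hz => hρ x hx _ (aff_mem hB h0 h1 hy hz)) hfm hf
  have h2 : volume B * ENNReal.ofReal ((av B δ x f - av B δ y f) ^ 2) ≤
      2 * dev B δ (SimpleFunc.const _ x) f + 2 * dev B δ (SimpleFunc.const _ y) f := by
    rw [mul_comm, ← setLIntegral_const, dev, dev]
    simp only [SimpleFunc.const_apply]
    rw [← lintegral_const_mul _ (by fun_prop),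
      ← lintegral_const_mul _ (by fun_prop), ← lintegral_add_left (by fun_prop)]
    apply lintegral_mono
    intro z
    have := ofReal_sq_le_two (av B δ x f) (av B δ y f) (f z)
    rwa [sub_sq_comm _ (f z), sub_sq_comm _ (f z)] at this
  calc _ ≤ volume B * (2 * dev B δ (SimpleFunc.const _ x) f +
        2 * dev B δ (SimpleFunc.const _ y) f) := by gcongr
    _ = 2 * (volume B * dev B δ (SimpleFunc.const _ x) f) +
        2 * (volume B * dev B δ (SimpleFunc.const _ y) f) := by ring
    _ ≤ 2 * (ENNReal.ofReal ((δ ^ N)⁻¹) * DD (B ×ˢ B ∩ near N ρ) f) +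
        2 * (ENNReal.ofReal ((δ ^ N)⁻¹) * DD (B ×ˢ B ∩ near N ρ) f) := by
        gcongr 2 * ?_ + 2 * ?_
        · exact key x hx
        · exact key y hy
    _ = _ := by rw [← add_mul]; norm_num

lemma five_sq (a b a' b' c : ℝ) : (a - b - a' + b' + c) ^ 2 ≤
    5 * (a ^ 2 + b ^ 2 + (a' ^ 2 + b' ^ 2 + c ^ 2)) := by
  linarith [sq_nonneg (a + b), sq_nonneg (a + a'), sq_nonneg (a - b'), sq_nonneg (a - c),
      sq_nonneg (b - a'), sq_nonneg (b + b'), sq_nonneg (b + c), sq_nonneg (a' + b'),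
      sq_nonneg (a' + c), sq_nonneg (b' - c)]

lemma DD_combine {N : ℕ} {B : Set (Euc N)} (hBm : MeasurableSet B)
    (δ : ℝ) (j : SimpleFunc (Euc N) (Euc N))
    {f g : Euc N → ℝ} (hf : Measurable f) (hg : Measurable g) :
    DD (B ×ˢ B) (fun x => f x - g x) ≤
      10 * volume B * (dev B δ j f + dev B δ j g) +
      5 * (volume B * volume B) * ∑ x ∈ j.range, ∑ y ∈ j.range,
        ENNReal.ofReal (((av B δ x f - av B δ y f) - (av B δ x g - av B δ y g)) ^ 2) := by
  have hav : ∀ f, Measurable fun x => av B δ (j x) f :=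
    fun f => (j.map fun y => av B δ y f).measurable
  have hav1 := hav f
  have hav2 := hav g
  set S := ∑ x ∈ j.range, ∑ y ∈ j.range,
        ENNReal.ofReal (((av B δ x f - av B δ y f) - (av B δ x g - av B δ y g)) ^ 2) with hS
  set A : Euc N → ℝ≥0∞ := fun x => ENNReal.ofReal ((f x - av B δ (j x) f) ^ 2) +
    ENNReal.ofReal ((g x - av B δ (j x) g) ^ 2) with hA
  have hAm : Measurable A := by fun_prop
  have hAi : ∫⁻ x in B, A x = dev B δ j f + dev B δ j g := by
    rw [hA, lintegral_add_left (by fun_prop)]; rfl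
  have hpt : ∀ x y, ENNReal.ofReal (((f x - g x) - (f y - g y)) ^ 2) ≤ 5 * (A x + (A y + S)) := by
    intro x y
    have hc : ENNReal.ofReal (((av B δ (j x) f - av B δ (j y) f) -
        (av B δ (j x) g - av B δ (j y) g)) ^ 2) ≤ S := by
      refine le_trans ?_ (Finset.single_le_sum (fun _ _ => zero_le) (j.mem_range_self x))
      exact Finset.single_le_sum (f := fun y => ENNReal.ofReal (((av B δ (j x) f - av B δ y f) -
        (av B δ (j x) g - av B δ y g)) ^ 2)) (fun _ _ => zero_le) (j.mem_range_self y)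
    refine le_trans ?_ (mul_le_mul_right (add_le_add_right (add_le_add_right hc _) _) _)
    rw [hA]
    simp only
    rw [show (5 : ℝ≥0∞) = ENNReal.ofReal 5 by simp]
    rw [← ENNReal.ofReal_add (by positivity) (by positivity),
      ← ENNReal.ofReal_add (by positivity) (by positivity),
      ← ENNReal.ofReal_add (by positivity) (by positivity),
      ← ENNReal.ofReal_add (by positivity) (by positivity),
      ← ENNReal.ofReal_mul (by norm_num)]
    apply ENNReal.ofReal_le_ofReal
    set a := f x - av B δ (j x) f with ha
    set b := g x - av B δ (j x) g with hb
    set a' := f y - av B δ (j y) f with ha'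
    set b' := g y - av B δ (j y) g with hb'
    set c := (av B δ (j x) f - av B δ (j y) f) - (av B δ (j x) g - av B δ (j y) g) with hc
    have e : (f x - g x) - (f y - g y) = a - b - a' + b' + c := by
      rw [ha, hb, ha', hb', hc]; ring
    rw [e]
    exact five_sq a b a' b' c
  clear_value A
  rw [DD, Measure.volume_eq_prod, ← Measure.prod_restrict]
  rw [lintegral_prod _ (by fun_prop)]
  calc _ ≤ ∫⁻ x in B, ∫⁻ y in B, 5 * (A x + (A y + S)) :=
        lintegral_mono fun x => lintegral_mono fun y => hpt x y
    _ = ∫⁻ x in B, 5 * (A x * volume B + ((∫⁻ y in B, A y) + S * volume B)) := by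
        apply lintegral_congr
        intro x
        rw [lintegral_const_mul _ (by fun_prop), lintegral_add_left (by fun_prop),
          lintegral_add_left (by fun_prop)]
        simp only [lintegral_const, Measure.restrict_apply_univ]
    _ = 5 * ((∫⁻ y in B, A y) * volume B +
          ((∫⁻ y in B, A y) + S * volume B) * volume B) := by
        rw [lintegral_const_mul _ (by fun_prop), lintegral_add_left (by fun_prop),
          lintegral_mul_const _ (by fun_prop)]
        simp
    _ = _ := by rw [hAi]; ring

lemma exists_net {N : ℕ} {B : Set (Euc N)} (hBb : IsBounded B) (hne : B.Nonempty) {δ : ℝ}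
    (h0 : 0 < δ) : ∃ j : SimpleFunc (Euc N) (Euc N), (∀ x, j x ∈ B) ∧ ∀ x ∈ B, ‖x - j x‖ < δ := by
  obtain ⟨t, htB, htf, hcov⟩ := Metric.finite_approx_of_totallyBounded
    (TotallyBounded.subset subset_closure hBb.isCompact_closure.totallyBounded) δ h0
  have : ∃ j : SimpleFunc (Euc N) (Euc N), (∀ x, j x ∈ B) ∧
      ∀ x ∈ ⋃ y ∈ t, Metric.ball y δ, ‖x - j x‖ < δ := by
    clear hcov
    classical
    induction t, htf using Set.Finite.induction_on with
    | empty =>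
      obtain ⟨b, hb⟩ := hne
      exact ⟨SimpleFunc.const _ b, fun _ => hb, by simp⟩
    | @insert a s _ _ ih =>
      obtain ⟨j, hj, hj2⟩ := ih ((subset_insert _ _).trans htB)
      refine ⟨SimpleFunc.piecewise (Metric.ball a δ) measurableSet_ball (SimpleFunc.const _ a) j,
        ?_, ?_⟩
      · intro x
        by_cases hx : x ∈ Metric.ball a δ
        · rw [SimpleFunc.coe_piecewise, piecewise_eq_of_mem _ _ _ hx]
          exact htB (mem_insert _ _)
        · rw [SimpleFunc.coe_piecewise, piecewise_eq_of_notMem _ _ _ hx]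
          exact hj x
      · intro x hx'
        by_cases hx : x ∈ Metric.ball a δ
        · rw [SimpleFunc.coe_piecewise, piecewise_eq_of_mem _ _ _ hx]
          simpa [dist_eq_norm] using hx
        · rw [SimpleFunc.coe_piecewise, piecewise_eq_of_notMem _ _ _ hx]
          apply hj2
          simpa [hx] using hx'
  obtain ⟨j, hj, hj2⟩ := this
  exact ⟨j, hj, fun x hx => hj2 x (hcov hx)⟩

end FracNeumann

namespace FracNeumann

lemma chart_compact {N : ℕ} (hN : 1 ≤ N) (𝓕 : Ultrafilter ℝ) {s₀ : ℝ} (hs₀ : 0 < s₀)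
    (h𝓕 : Ioo s₀ 1 ∈ 𝓕) {B : Set (Euc N)} (hB : Convex ℝ B) (hBo : IsOpen B) (hBb : IsBounded B)
    (hne : B.Nonempty) (v : ℝ → Euc N → ℝ) (hv : ∀ s, Measurable (v s))
    (hint : ∀ s, IntegrableOn (v s) B) {C : ℝ} (hC : 0 ≤ C)
    (hE : ∀ s ∈ Ioo s₀ 1, ENNReal.ofReal (1 - s) * EE s (B ×ˢ B) (v s) ≤ ENNReal.ofReal C) :
    Tendsto (fun p : ℝ × ℝ => DD (B ×ˢ B) (fun x => v p.1 x - v p.2 x))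
      ((𝓕 : Filter ℝ) ×ˢ (𝓕 : Filter ℝ)) (𝓝 0) := by
  have hBm := hBo.measurableSet
  have hb0 : volume B ≠ 0 := (hBo.measure_pos volume hne).ne'
  have hbt : volume B ≠ ⊤ := hBb.measure_lt_top.ne
  obtain ⟨R, hR1, hR⟩ : ∃ R : ℝ, 1 ≤ R ∧ ∀ x ∈ B, ∀ z ∈ B, ‖x - z‖ < R := by
    obtain ⟨d, hd⟩ := Metric.isBounded_iff.mp hBb
    refine ⟨max d 0 + 1, by linarith [le_max_right d 0], fun x hx z hz => ?_⟩
    have := hd hx hz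
    rw [dist_eq_norm] at this
    linarith [le_max_left d 0]
  have hD : ∀ s ∈ Ioo s₀ 1, ∀ r : ℝ, 0 < r → DD (B ×ˢ B ∩ near N r) (v s) ≤
      ENNReal.ofReal (8 * r ^ ((N : ℝ) + 2 * s) * C) := by
    intro s hs r hr
    refine (DD_le_EE hN (prodset_midStable hB hBm) (hv s) hr
      ⟨hs₀.trans hs.1, hs.2⟩).trans ?_
    rw [ENNReal.ofReal_mul (p := 8 * r ^ ((N : ℝ) + 2 * s)) (by positivity)]
    exact mul_le_mul_right (hE s hs) _
  have h𝓕2 : ∀ᶠ p : ℝ × ℝ in ((𝓕 : Filter ℝ) ×ˢ (𝓕 : Filter ℝ)), p.1 ∈ Ioo s₀ 1 ∧ p.2 ∈ Ioo s₀ 1 :=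
    prod_mem_prod h𝓕 h𝓕
  rw [ENNReal.tendsto_nhds_zero]
  intro ε hε
  set M : ℝ := 8 * (1 + R) ^ ((N : ℝ) + 2 * s₀) * C with hM
  obtain ⟨δ, hδ0, hδ1, hδ⟩ : ∃ δ : ℝ, 0 < δ ∧ δ * (1 + R) ≤ 1 ∧
      ENNReal.ofReal (20 * M * δ ^ (2 * s₀)) ≤ ε / 2 := by
    have h1 : Tendsto (fun δ : ℝ => ENNReal.ofReal (20 * M * δ ^ (2 * s₀))) (𝓝[>] 0) (𝓝 0) := by
      have : Tendsto (fun δ : ℝ => 20 * M * δ ^ (2 * s₀)) (𝓝 0) (𝓝 (20 * M * 0 ^ (2 * s₀))) :=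
        ((Real.continuousAt_rpow_const 0 (2 * s₀) (Or.inr (by linarith))).tendsto).const_mul _
      rw [Real.zero_rpow (by positivity), mul_zero] at this
      have h2 := (ENNReal.continuous_ofReal.tendsto 0).comp (this.mono_left (nhdsWithin_le_nhds (s := Ioi 0)))
      simpa [Function.comp_def] using h2
    have h2 := (ENNReal.tendsto_nhds_zero.mp h1) (ε / 2) (ENNReal.half_pos hε.ne')
    have h3 : ∀ᶠ δ : ℝ in 𝓝[>] 0, δ ∈ Ioc 0 (1 / (1 + R)) :=
      Ioc_mem_nhdsGT (by positivity)
    obtain ⟨δ, ha, hb, hc⟩ := (h2.and h3).exists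
    exact ⟨δ, hb, by rwa [le_div_iff₀ (by positivity)] at hc, ha⟩
  have hδ1' : δ ≤ 1 := by nlinarith
  obtain ⟨j, hjB, hj⟩ := exists_net hBb hne hδ0
  set ρ := δ * (1 + R) with hρ
  have hρ0 : 0 < ρ := by positivity
  have hρ' : ∀ x ∈ B, ∀ z ∈ B, ‖x - ((1 - δ) • j x + δ • z)‖ < ρ := by
    intro x hx z hz
    have e : x - ((1 - δ) • j x + δ • z) = (x - j x) + δ • (j x - z) := by module
    rw [e]
    refine (norm_add_le _ _).trans_lt ?_
    rw [norm_smul, Real.norm_of_nonneg hδ0.le]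
    have := hj x hx
    have := hR (j x) (hjB x) z hz
    rw [hρ]
    nlinarith
  have hdev : ∀ s ∈ Ioo s₀ 1, volume B * dev B δ j (v s) ≤
      ENNReal.ofReal (M * δ ^ (2 * s₀)) := by
    intro s hs
    refine (dev_le hB hBm hbt hδ0 hδ1' j hjB hρ' (hv s) (hint s)).trans ?_
    refine (mul_le_mul_right (hD s hs ρ hρ0) _).trans ?_
    rw [← ENNReal.ofReal_mul (by positivity)]
    apply ENNReal.ofReal_le_ofReal
    have h1 : ρ ^ ((N : ℝ) + 2 * s) ≤ ρ ^ ((N : ℝ) + 2 * s₀) :=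
      Real.rpow_le_rpow_of_exponent_ge hρ0 hδ1 (by linarith [hs.1])
    have h2 : ρ ^ ((N : ℝ) + 2 * s₀) =
        δ ^ N * δ ^ (2 * s₀) * (1 + R) ^ ((N : ℝ) + 2 * s₀) := by
      rw [hρ, Real.mul_rpow hδ0.le (by positivity), Real.rpow_add hδ0, Real.rpow_natCast]
    calc (δ ^ N)⁻¹ * (8 * ρ ^ ((N : ℝ) + 2 * s) * C) ≤
          (δ ^ N)⁻¹ * (8 * ρ ^ ((N : ℝ) + 2 * s₀) * C) := by gcongr
      _ = M * δ ^ (2 * s₀) := by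
          rw [h2, hM]
          field_simp
  -- convergence of averages
  have hav : ∀ x ∈ B, ∀ y ∈ B, ∃ l : ℝ, Tendsto
      (fun s => av B δ x (v s) - av B δ y (v s)) (𝓕 : Filter ℝ) (𝓝 l) := by
    intro x hx y hy
    set K : ℝ≥0∞ := 4 * (ENNReal.ofReal ((δ ^ N)⁻¹) *
      ENNReal.ofReal (8 * R ^ ((N : ℝ) + 2) * C)) with hK
    have hKt : K / (volume B * volume B) ≠ ⊤ := by
      apply ENNReal.div_ne_top
      · exact ENNReal.mul_ne_top (by simp) (ENNReal.mul_ne_top (by simp) (by simp))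
      · exact mul_ne_zero hb0 hb0
    have hbound : ∀ s ∈ Ioo s₀ 1, ENNReal.ofReal ((av B δ x (v s) - av B δ y (v s)) ^ 2) ≤
        K / (volume B * volume B) := by
      intro s hs
      rw [ENNReal.le_div_iff_mul_le (Or.inl (mul_ne_zero hb0 hb0))
        (Or.inl (ENNReal.mul_ne_top hbt hbt))]
      have := av_diff_le hB hBm hbt hδ0 hδ1' hR hx hy (hv s) (hint s)
      rw [mul_comm, mul_assoc]
      refine this.trans ?_
      rw [hK]
      gcongr
      refine (hD s hs R (by linarith)).trans ?_
      apply ENNReal.ofReal_le_ofReal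
      gcongr
      linarith [hs.2]
    set L := (K / (volume B * volume B)).toReal with hL
    have hmem : Icc (-(L + 1)) (L + 1) ∈
        𝓕.map (fun s => av B δ x (v s) - av B δ y (v s)) := by
      rw [Ultrafilter.mem_map]
      filter_upwards [h𝓕] with s hs
      have h1 := hbound s hs
      rw [ENNReal.ofReal_le_iff_le_toReal hKt, ← hL] at h1
      have hL0 : 0 ≤ L := ENNReal.toReal_nonneg
      rw [mem_preimage, mem_Icc, ← abs_le]
      apply abs_le_of_sq_le_sq _ (by linarith)
      nlinarith
    obtain ⟨l, _, hl⟩ := isCompact_Icc.ultrafilter_le_nhds' _ hmem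
    exact ⟨l, hl⟩
  have hsum : Tendsto (fun p : ℝ × ℝ => 5 * (volume B * volume B) *
      ∑ x ∈ j.range, ∑ y ∈ j.range,
        ENNReal.ofReal (((av B δ x (v p.1) - av B δ y (v p.1)) -
          (av B δ x (v p.2) - av B δ y (v p.2))) ^ 2))
      ((𝓕 : Filter ℝ) ×ˢ (𝓕 : Filter ℝ)) (𝓝 0) := by
    have hjr : ∀ x ∈ j.range, x ∈ B := by
      intro x hx
      obtain ⟨z, rfl⟩ := SimpleFunc.mem_range.mp hx
      exact hjB z
    have : Tendsto (fun p : ℝ × ℝ => ∑ x ∈ j.range, ∑ y ∈ j.range,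
        ENNReal.ofReal (((av B δ x (v p.1) - av B δ y (v p.1)) -
          (av B δ x (v p.2) - av B δ y (v p.2))) ^ 2))
        ((𝓕 : Filter ℝ) ×ˢ (𝓕 : Filter ℝ)) (𝓝 (∑ x ∈ j.range, ∑ y ∈ j.range, 0)) := by
      apply tendsto_finsetSum
      intro x hx
      apply tendsto_finsetSum
      intro y hy
      obtain ⟨l, hl⟩ := hav x (hjr x hx) y (hjr y hy)
      have h1 := ((hl.comp tendsto_fst).sub (hl.comp tendsto_snd)).pow 2
      have h2 := (ENNReal.continuous_ofReal.tendsto _).comp h1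
      simpa [Function.comp_def] using h2
    have h2 := ENNReal.Tendsto.const_mul (a := 5 * (volume B * volume B)) this
      (Or.inr (ENNReal.mul_ne_top (by simp) (ENNReal.mul_ne_top hbt hbt)))
    simpa using h2
  filter_upwards [h𝓕2, (ENNReal.tendsto_nhds_zero.mp hsum) (ε / 2) (ENNReal.half_pos hε.ne')]
    with p hp hp2
  refine (DD_combine hBm δ j (hv p.1) (hv p.2)).trans ?_
  rw [← ENNReal.add_halves ε]
  refine add_le_add ?_ hp2
  refine le_trans ?_ hδ
  calc 10 * volume B * (dev B δ j (v p.1) + dev B δ j (v p.2))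
      = 10 * (volume B * dev B δ j (v p.1) + volume B * dev B δ j (v p.2)) := by ring
    _ ≤ 10 * (ENNReal.ofReal (M * δ ^ (2 * s₀)) + ENNReal.ofReal (M * δ ^ (2 * s₀))) := by
        gcongr 10 * (?_ + ?_)
        · exact hdev _ hp.1
        · exact hdev _ hp.2
    _ = _ := by
        rw [← ENNReal.ofReal_add (by positivity) (by positivity),
          show (10 : ℝ≥0∞) = ENNReal.ofReal 10 by simp, ← ENNReal.ofReal_mul (by norm_num)]
        congr 1; ring

end FracNeumann

namespace FracNeumann

lemma lintegral_shear_aux {N : ℕ} {e : Euc N} (he : ‖e‖ = 1) (F : Euc N → ℝ≥0∞)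
    (hF : Measurable F) :
    ∫⁻ x, F x = ∫⁻ x : Euc N, (Ioc (0 : ℝ) 1).indicator (fun _ => (1 : ℝ≥0∞)) (inner ℝ x e) *
      ∫⁻ t : ℝ, F (x - t • e) := by
  set η : ℝ → ℝ≥0∞ := (Ioc (0 : ℝ) 1).indicator (fun _ => (1 : ℝ≥0∞)) with hη
  have hηm : Measurable η := measurable_const.indicator measurableSet_Ioc
  have h1 : ∀ a : ℝ, ∫⁻ t, η (a + t) = 1 := by
    intro a
    rw [lintegral_add_left_eq_self (μ := volume) η a, hη, lintegral_indicator measurableSet_Ioc]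
    simp
  have h2 : ∀ t : ℝ, ∫⁻ x : Euc N, F x * η (inner ℝ x e + t) =
      ∫⁻ x : Euc N, F (x - t • e) * η (inner ℝ x e) := by
    intro t
    rw [← lintegral_sub_right_eq_self (μ := volume)
      (fun x : Euc N => F x * η (inner ℝ x e + t)) (t • e)]
    congr 1; ext x
    congr 2
    rw [inner_sub_left, inner_smul_left, real_inner_self_eq_norm_sq, he]
    simp
  have hin : Measurable (fun x : Euc N => (inner ℝ x e : ℝ)) := by fun_prop
  calc ∫⁻ x, F x = ∫⁻ x : Euc N, ∫⁻ t : ℝ, F x * η (inner ℝ x e + t) := by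
        congr 1; ext x
        rw [lintegral_const_mul _ (by fun_prop), h1, mul_one]
    _ = ∫⁻ t : ℝ, ∫⁻ x : Euc N, F x * η (inner ℝ x e + t) := by
        rw [lintegral_lintegral_swap]
        apply Measurable.aemeasurable
        fun_prop
    _ = ∫⁻ t : ℝ, ∫⁻ x : Euc N, F (x - t • e) * η (inner ℝ x e) := by simp_rw [h2]
    _ = ∫⁻ x : Euc N, ∫⁻ t : ℝ, F (x - t • e) * η (inner ℝ x e) := by
        rw [lintegral_lintegral_swap]
        apply Measurable.aemeasurable
        fun_prop
    _ = _ := by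
        congr 1; ext x
        rw [lintegral_mul_const _ (by fun_prop), mul_comm]

lemma shear_mp {N : ℕ} {e : Euc N} (he : ‖e‖ = 1) {g : Euc N → ℝ} (hg : Measurable g)
    (hinv : ∀ x (t : ℝ), g (x + t • e) = g x) :
    MeasurePreserving (fun x => x + g x • e) (volume : Measure (Euc N)) volume := by
  have hT : Measurable (fun x : Euc N => x + g x • e) := by fun_prop
  refine ⟨hT, ?_⟩
  ext A hA
  rw [Measure.map_apply hT hA]
  have hF : Measurable (A.indicator (fun _ => (1 : ℝ≥0∞))) := measurable_const.indicator hA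
  have key : ∫⁻ x, A.indicator (fun _ => (1 : ℝ≥0∞)) (x + g x • e) =
      ∫⁻ x, A.indicator (fun _ => (1 : ℝ≥0∞)) x := by
    rw [lintegral_shear_aux he (fun x => A.indicator (fun _ => (1 : ℝ≥0∞)) (x + g x • e))
      (hF.comp hT), lintegral_shear_aux he _ hF]
    congr 1; ext x; congr 1
    rw [← lintegral_sub_right_eq_self (μ := volume)
      (fun t : ℝ => A.indicator (fun _ => (1 : ℝ≥0∞)) (x - t • e)) (g x)]
    congr 1; ext t
    have : g (x - t • e) = g x := by
      have := hinv x (-t)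
      rwa [neg_smul, ← sub_eq_add_neg] at this
    rw [this]
    congr 1; module
  have h1 : (fun x : Euc N => A.indicator (fun _ => (1 : ℝ≥0∞)) (x + g x • e)) =
      ((fun x : Euc N => x + g x • e) ⁻¹' A).indicator (fun _ => (1 : ℝ≥0∞)) := by
    ext x; rfl
  rw [h1, lintegral_indicator (hT hA), lintegral_indicator hA] at key
  simpa using key

lemma DD_transport {N : ℕ} {T : Euc N → Euc N} (hT : MeasurePreserving T volume volume)
    {V : Set (Euc N)} (hV : MeasurableSet V) {u : Euc N → ℝ} (hu : Measurable u) :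
    DD ((T ⁻¹' V) ×ˢ (T ⁻¹' V)) (fun x => u (T x)) = DD (V ×ˢ V) u := by
  have hp : MeasurePreserving (Prod.map T T) (volume : Measure (Euc N × Euc N)) volume := by
    rw [Measure.volume_eq_prod]
    exact hT.prod hT
  have := hp.setLIntegral_comp_preimage (hV.prod hV) (dsq_meas hu)
  exact this

lemma EE_transport {N : ℕ} {T : Euc N → Euc N} (hT : MeasurePreserving T volume volume)
    {V : Set (Euc N)} (hV : MeasurableSet V) {u : Euc N → ℝ} (hu : Measurable u) {K : ℝ}
    (hK : 1 ≤ K) (hL : ∀ x y, ‖T x - T y‖ ≤ K * ‖x - y‖) {s : ℝ} (hs : s ∈ Ioo (0 : ℝ) 1) :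
    EE s ((T ⁻¹' V) ×ˢ (T ⁻¹' V)) (fun x => u (T x)) ≤
      ENNReal.ofReal (K ^ ((N : ℝ) + 2)) * EE s (V ×ˢ V) u := by
  have hp : MeasurePreserving (Prod.map T T) (volume : Measure (Euc N × Euc N)) volume := by
    rw [Measure.volume_eq_prod]
    exact hT.prod hT
  have hm : Measurable (fun q : Euc N × Euc N =>
      ENNReal.ofReal ((u q.1 - u q.2) ^ 2 / kern N s q.1 q.2)) := by
    unfold kern; fun_prop
  have := hp.setLIntegral_comp_preimage (hV.prod hV) hm
  unfold EE
  rw [← this, ← lintegral_const_mul _ (by exact hm.comp hp.measurable)]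
  apply lintegral_mono
  intro q
  simp only [Prod.map_fst, Prod.map_snd]
  rw [← ENNReal.ofReal_mul (by positivity)]
  apply ENNReal.ofReal_le_ofReal
  unfold kern
  have hp0 : 0 < (N : ℝ) + 2 * s := by have := hs.1; positivity
  by_cases hq : ‖T q.1 - T q.2‖ = 0
  · have : T q.1 = T q.2 := by rwa [norm_eq_zero, sub_eq_zero] at hq
    rw [this]; simp
  have hTp : 0 < ‖T q.1 - T q.2‖ := lt_of_le_of_ne (norm_nonneg _) (Ne.symm hq)
  have hqp : 0 < ‖q.1 - q.2‖ := by
    by_contra h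
    have : ‖q.1 - q.2‖ = 0 := le_antisymm (not_lt.mp h) (norm_nonneg _)
    have h2 := hL q.1 q.2
    rw [this] at h2; linarith
  have h1 : ‖T q.1 - T q.2‖ ^ ((N : ℝ) + 2 * s) ≤
      K ^ ((N : ℝ) + 2) * ‖q.1 - q.2‖ ^ ((N : ℝ) + 2 * s) := by
    calc _ ≤ (K * ‖q.1 - q.2‖) ^ ((N : ℝ) + 2 * s) :=
          Real.rpow_le_rpow hTp.le (hL _ _) hp0.le
      _ = K ^ ((N : ℝ) + 2 * s) * ‖q.1 - q.2‖ ^ ((N : ℝ) + 2 * s) :=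
          Real.mul_rpow (by linarith) hqp.le
      _ ≤ _ := by
          gcongr
          linarith [hs.2]
  have h2 : 0 < ‖T q.1 - T q.2‖ ^ ((N : ℝ) + 2 * s) := Real.rpow_pos_of_pos hTp _
  have h3 : 0 < ‖q.1 - q.2‖ ^ ((N : ℝ) + 2 * s) := Real.rpow_pos_of_pos hqp _
  rw [← mul_div_assoc, div_le_div_iff₀ h3 h2]
  nlinarith [mul_le_mul_of_nonneg_left h1 (sq_nonneg (u (T q.1) - u (T q.2)))]

/-- Cauchy property of the family along the ultrafilter on `V`. -/
def QQ {N : ℕ} (𝓕 : Ultrafilter ℝ) (u : ℝ → Euc N → ℝ) (V : Set (Euc N)) : Prop :=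
  Tendsto (fun p : ℝ × ℝ => DD (V ×ˢ V) (fun x => u p.1 x - u p.2 x))
      ((𝓕 : Filter ℝ) ×ˢ (𝓕 : Filter ℝ)) (𝓝 0)

lemma EE_mono {N : ℕ} {s : ℝ} {A B : Set (Euc N × Euc N)} (h : A ⊆ B) (v : Euc N → ℝ) :
    EE s A v ≤ EE s B v := lintegral_mono_set h

lemma DD_mono {N : ℕ} {A B : Set (Euc N × Euc N)} (h : A ⊆ B) (v : Euc N → ℝ) :
    DD A v ≤ DD B v := lintegral_mono_set h

/-- Chart lemma in transported form. -/
lemma QQ_transport {N : ℕ} (hN : 1 ≤ N) (𝓕 : Ultrafilter ℝ) {s₀ : ℝ} (hs₀ : 0 < s₀)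
    (h𝓕 : Ioo s₀ 1 ∈ 𝓕) {Ω V : Set (Euc N)} (hVΩ : V ⊆ Ω) (hV : IsOpen V)
    {T : Euc N → Euc N} (hT : MeasurePreserving T volume volume) {K : ℝ}
    (hK : 1 ≤ K) (hL : ∀ x y, ‖T x - T y‖ ≤ K * ‖x - y‖)
    (hB : Convex ℝ (T ⁻¹' V)) (hBo : IsOpen (T ⁻¹' V)) (hBb : IsBounded (T ⁻¹' V))
    (u : ℝ → Euc N → ℝ) (hu : ∀ s, Measurable (u s))
    (hint : ∀ s, IntegrableOn (u s) Ω) {C : ℝ} (hC : 0 ≤ C)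
    (hE : ∀ s ∈ Ioo s₀ 1, ENNReal.ofReal (1 - s) * EE s (Ω ×ˢ Ω) (u s) ≤ ENNReal.ofReal C) :
    QQ 𝓕 u V := by
  unfold QQ
  have e : (fun p : ℝ × ℝ => DD (V ×ˢ V) (fun x => u p.1 x - u p.2 x)) =
      fun p : ℝ × ℝ => DD ((T ⁻¹' V) ×ˢ (T ⁻¹' V)) (fun x => u p.1 (T x) - u p.2 (T x)) := by
    ext p
    exact (DD_transport hT hV.measurableSet (u := fun x => u p.1 x - u p.2 x)
      ((hu _).sub (hu _))).symm
  rw [e]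
  rcases (T ⁻¹' V).eq_empty_or_nonempty with h | h
  · simp only [h, empty_prod, DD, Measure.restrict_empty, lintegral_zero_measure]
    exact tendsto_const_nhds
  refine chart_compact hN 𝓕 hs₀ h𝓕 hB hBo hBb h (fun s x => u s (T x))
    (fun s => (hu s).comp hT.measurable) (fun s => ?_) (C := K ^ ((N : ℝ) + 2) * C)
    (by positivity) (fun s hs => ?_)
  · have h1 : Integrable (u s) (volume.restrict V) := (hint s).mono_set hVΩ
    have h2 := hT.restrict_preimage hV.measurableSet
    exact (h2.integrable_comp h1.aestronglyMeasurable).mpr h1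
  · have h1 := EE_transport hT hV.measurableSet (hu s) hK hL ⟨hs₀.trans hs.1, hs.2⟩
    calc _ ≤ ENNReal.ofReal (1 - s) * (ENNReal.ofReal (K ^ ((N : ℝ) + 2)) *
          EE s (Ω ×ˢ Ω) (u s)) := by
          gcongr
          exact h1.trans (by gcongr; exact EE_mono (prod_mono hVΩ hVΩ) _)
      _ = ENNReal.ofReal (K ^ ((N : ℝ) + 2)) * (ENNReal.ofReal (1 - s) *
          EE s (Ω ×ˢ Ω) (u s)) := by ring
      _ ≤ ENNReal.ofReal (K ^ ((N : ℝ) + 2)) * ENNReal.ofReal C := by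
          gcongr; exact hE s hs
      _ = _ := (ENNReal.ofReal_mul (by positivity)).symm

end FracNeumann

namespace FracNeumann

lemma shear_facts {N : ℕ} {e : Euc N} (he : ‖e‖ = 1) {L : NNReal} {f : Euc N → ℝ}
    (hf : LipschitzWith L f) : ∃ (T S : Euc N → Euc N) (K : ℝ), Continuous T ∧ Continuous S ∧
      (∀ z, S (T z) = z) ∧ (∀ z, T (S z) = z) ∧ MeasurePreserving T volume volume ∧ 1 ≤ K ∧
      (∀ x y, ‖T x - T y‖ ≤ K * ‖x - y‖) ∧
      (∀ z, f (T z - (inner ℝ (T z) e : ℝ) • e) < (inner ℝ (T z) e : ℝ) ↔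
        0 < (inner ℝ z e : ℝ)) := by
  obtain ⟨P, hP⟩ : ∃ P : Euc N → Euc N, ∀ y, P y = y - (inner ℝ y e : ℝ) • e := ⟨_, fun y => rfl⟩
  have hee : (inner ℝ e e : ℝ) = 1 := by rw [real_inner_self_eq_norm_sq, he]; norm_num
  have hPt : ∀ x (t : ℝ), P (x + t • e) = P x := by
    intro x t
    simp only [hP, inner_add_left, inner_smul_left, hee]
    simp only [conj_trivial, mul_one]
    module
  have hPc : Continuous P := by
    rw [show P = fun y => y - (inner ℝ y e : ℝ) • e from funext hP]
    fun_prop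
  have hPsub : ∀ x y, P x - P y = P (x - y) := by
    intro x y; simp only [hP, inner_sub_left]; module
  have hPn : ∀ x, ‖P x‖ ≤ 2 * ‖x‖ := by
    intro x
    rw [hP]
    have h1 := norm_sub_le x ((inner ℝ x e : ℝ) • e)
    rw [norm_smul, he, mul_one, Real.norm_eq_abs] at h1
    have := abs_real_inner_le_norm x e
    rw [he, mul_one] at this
    linarith
  have hfc := hf.continuous
  have hST : ∀ z, (z + f (P z) • e) - f (P (z + f (P z) • e)) • e = z := by
    intro z
    rw [hPt]; abel
  have hTS : ∀ z, (z - f (P z) • e) + f (P (z - f (P z) • e)) • e = z := by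
    intro z
    have := hPt z (-f (P z))
    rw [neg_smul, ← sub_eq_add_neg] at this
    rw [this]; abel
  have hmp : MeasurePreserving (fun x => x + f (P x) • e) volume volume :=
    shear_mp he (g := fun x => f (P x)) (hfc.comp hPc).measurable (fun x t => by simp only [hPt])
  refine ⟨fun x => x + f (P x) • e, fun x => x - f (P x) • e, 1 + 2 * L, by fun_prop, by fun_prop,
    hST, hTS, hmp, ?_, ?_, ?_⟩
  · have := L.coe_nonneg; linarith
  · intro x y
    have e1 : (x + f (P x) • e) - (y + f (P y) • e) = (x - y) + (f (P x) - f (P y)) • e := by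
      module
    simp only
    rw [e1]
    refine (norm_add_le _ _).trans ?_
    rw [norm_smul, he, mul_one]
    have h1 := hf.norm_sub_le (P x) (P y)
    rw [hPsub] at h1
    have h2 := mul_le_mul_of_nonneg_left (hPn (x - y)) L.coe_nonneg
    linarith
  · intro z
    simp only
    rw [← hP, hPt]
    have h2 : (inner ℝ (z + f (P z) • e) e : ℝ) = inner ℝ z e + f (P z) := by
      simp only [inner_add_left, inner_smul_left, hee, conj_trivial, mul_one]
    rw [h2]
    constructor <;> intro h <;> linarith

lemma exists_chart {N : ℕ} (hN : 1 ≤ N) (𝓕 : Ultrafilter ℝ) {s₀ : ℝ} (hs₀ : 0 < s₀)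
    (h𝓕 : Ioo s₀ 1 ∈ 𝓕) {Ω : Set (Euc N)} (hΩ : IsLipschitzDomain N Ω)
    (u : ℝ → Euc N → ℝ) (hu : ∀ s, Measurable (u s))
    (hint : ∀ s, IntegrableOn (u s) Ω) {C : ℝ} (hC : 0 ≤ C)
    (hE : ∀ s ∈ Ioo s₀ 1, ENNReal.ofReal (1 - s) * EE s (Ω ×ˢ Ω) (u s) ≤ ENNReal.ofReal C)
    (x₀ : Euc N) (hx₀ : x₀ ∈ closure Ω) :
    ∃ U : Set (Euc N), IsOpen U ∧ x₀ ∈ U ∧ QQ 𝓕 u (U ∩ Ω) := by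
  obtain ⟨hΩo, hΩb, hΩc, hΩL⟩ := hΩ
  by_cases hx : x₀ ∈ Ω
  · obtain ⟨ρ, hρ, hsub⟩ := Metric.isOpen_iff.mp hΩo x₀ hx
    refine ⟨Metric.ball x₀ ρ, Metric.isOpen_ball, Metric.mem_ball_self hρ, ?_⟩
    rw [inter_eq_self_of_subset_left hsub]
    refine QQ_transport (T := id) (K := 1) hN 𝓕 hs₀ h𝓕 hsub Metric.isOpen_ball
      (MeasurePreserving.id _) le_rfl ?_ ?_ ?_ ?_ u hu hint hC hE
    · intro x y; simp
    · rw [preimage_id]; exact convex_ball _ _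
    · rw [preimage_id]; exact Metric.isOpen_ball
    · rw [preimage_id]; exact Metric.isBounded_ball
  have hfr : x₀ ∈ frontier Ω := by
    rw [frontier, hΩo.interior_eq]; exact ⟨hx₀, hx⟩
  obtain ⟨e, he, r, hr, L, f, hf, hgr⟩ := hΩL x₀ hfr
  obtain ⟨T, S, K, hTc, hSc, hST, hTS, hmp, hK1, hLip, hiff⟩ := shear_facts he hf
  have hρ0 : 0 < r / K := by positivity
  have hpre : T ⁻¹' (S ⁻¹' Metric.ball (S x₀) (r / K) ∩ Ω) =
      Metric.ball (S x₀) (r / K) ∩ {z | 0 < (inner ℝ z e : ℝ)} := by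
    ext z
    simp only [mem_preimage, mem_inter_iff, hST, mem_ofPred_eq]
    apply and_congr_right
    intro hz
    have hb : T z ∈ Metric.ball x₀ r := by
      rw [mem_ball_iff_norm] at hz ⊢
      have h1 := hLip z (S x₀)
      rw [hTS] at h1
      refine h1.trans_lt ?_
      calc K * ‖z - S x₀‖ < K * (r / K) := by gcongr
        _ = r := by field_simp
    rw [hgr _ hb]
    exact hiff z
  have hUo : IsOpen (S ⁻¹' Metric.ball (S x₀) (r / K)) := Metric.isOpen_ball.preimage hSc
  refine ⟨S ⁻¹' Metric.ball (S x₀) (r / K), hUo, ?_, ?_⟩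
  · rw [mem_preimage]; exact Metric.mem_ball_self hρ0
  have hhc : Convex ℝ {z : Euc N | 0 < (inner ℝ z e : ℝ)} :=
    by
      intro x hx y hy a b ha hb hab
      simp only [mem_ofPred_eq, inner_add_left, real_inner_smul_left] at hx hy ⊢
      rcases ha.eq_or_lt with h | h
      · have : b = 1 := by linarith
        rw [← h, this]; linarith
      · have := mul_pos h hx
        have := mul_nonneg hb hy.le
        linarith
  have hho : IsOpen {z : Euc N | 0 < (inner ℝ z e : ℝ)} :=
    isOpen_lt continuous_const (by fun_prop)
  refine QQ_transport hN 𝓕 hs₀ h𝓕 inter_subset_right (hUo.inter hΩo) hmp hK1 hLip ?_ ?_ ?_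
    u hu hint hC hE
  · rw [hpre]; exact (convex_ball _ _).inter hhc
  · rw [hpre]; exact Metric.isOpen_ball.inter hho
  · rw [hpre]; exact Metric.isBounded_ball.subset inter_subset_left

lemma DD_prod {N : ℕ} (A B : Set (Euc N)) {v : Euc N → ℝ} (hv : Measurable v) :
    DD (A ×ˢ B) v = ∫⁻ x in A, ∫⁻ y in B, ENNReal.ofReal ((v x - v y) ^ 2) := by
  unfold DD
  rw [Measure.volume_eq_prod, ← Measure.prod_restrict, lintegral_prod _ (dsq_meas hv).aemeasurable]

lemma DD_cross {N : ℕ} {A B : Set (Euc N)} {v : Euc N → ℝ} (hv : Measurable v) :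
    volume (A ∩ B) * DD (A ×ˢ B) v ≤
      2 * volume B * DD (A ×ˢ A) v + 2 * volume A * DD (B ×ˢ B) v := by
  have hm : Measurable (fun q : Euc N × Euc N => ENNReal.ofReal ((v q.1 - v q.2) ^ 2)) :=
    dsq_meas hv
  set G : Euc N → ℝ≥0∞ := fun x => ∫⁻ z in A ∩ B, ENNReal.ofReal ((v x - v z) ^ 2) with hG
  have hGm : Measurable G := Measurable.lintegral_prod_right hm
  have hGA : ∫⁻ x in A, G x ≤ DD (A ×ˢ A) v := by
    rw [← DD_prod A (A ∩ B) hv]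
    exact DD_mono (prod_mono le_rfl inter_subset_left) _
  have hGB : ∫⁻ x in B, G x ≤ DD (B ×ˢ B) v := by
    rw [← DD_prod B (A ∩ B) hv]
    exact DD_mono (prod_mono le_rfl inter_subset_right) _
  have hpt : ∀ x y, volume (A ∩ B) * ENNReal.ofReal ((v x - v y) ^ 2) ≤ 2 * G x + 2 * G y := by
    intro x y
    calc volume (A ∩ B) * ENNReal.ofReal ((v x - v y) ^ 2)
        = ∫⁻ z in A ∩ B, ENNReal.ofReal ((v x - v y) ^ 2) := by
          rw [setLIntegral_const, mul_comm]
      _ ≤ ∫⁻ z in A ∩ B, (2 * ENNReal.ofReal ((v x - v z) ^ 2) +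
            2 * ENNReal.ofReal ((v y - v z) ^ 2)) :=
          lintegral_mono fun z => ofReal_sq_le_two _ _ _
      _ = _ := by
          rw [lintegral_add_left (by fun_prop), lintegral_const_mul _ (by fun_prop),
            lintegral_const_mul _ (by fun_prop)]
  rw [DD_prod A B hv, ← lintegral_const_mul _ (Measurable.lintegral_prod_right hm)]
  calc ∫⁻ x in A, volume (A ∩ B) * ∫⁻ y in B, ENNReal.ofReal ((v x - v y) ^ 2)
      ≤ ∫⁻ x in A, (2 * volume B * G x + 2 * (∫⁻ y in B, G y)) := by
        apply lintegral_mono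
        intro x
        simp only
        rw [← lintegral_const_mul _ (by fun_prop)]
        refine (lintegral_mono (fun y => hpt x y)).trans ?_
        rw [lintegral_add_left (by fun_prop), lintegral_const_mul _ hGm, setLIntegral_const]
        apply le_of_eq; ring
    _ = 2 * volume B * (∫⁻ x in A, G x) + 2 * volume A * (∫⁻ y in B, G y) := by
        rw [lintegral_add_left (by fun_prop), lintegral_const_mul _ hGm, setLIntegral_const]
        ring
    _ ≤ _ := by gcongr

lemma QQ_union {N : ℕ} {𝓕 : Ultrafilter ℝ} {u : ℝ → Euc N → ℝ} (hu : ∀ s, Measurable (u s))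
    {V W : Set (Euc N)} (hV : IsOpen V) (hW : IsOpen W) (hVt : volume V ≠ ⊤) (hWt : volume W ≠ ⊤)
    (hne : (V ∩ W).Nonempty) (h1 : QQ 𝓕 u V) (h2 : QQ 𝓕 u W) : QQ 𝓕 u (V ∪ W) := by
  have hm0 : volume (V ∩ W) ≠ 0 := ((hV.inter hW).measure_pos volume hne).ne'
  have hmt : volume (V ∩ W) ≠ ⊤ := ne_top_of_le_ne_top hVt (measure_mono inter_subset_left)
  set m := volume (V ∩ W) with hm
  have hd : ∀ p : ℝ × ℝ, Measurable (fun x => u p.1 x - u p.2 x) := fun p => (hu _).sub (hu _)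
  set D1 := fun p : ℝ × ℝ => DD (V ×ˢ V) (fun x => u p.1 x - u p.2 x) with hD1
  set D2 := fun p : ℝ × ℝ => DD (W ×ˢ W) (fun x => u p.1 x - u p.2 x) with hD2
  have hc : ∀ p, DD (V ×ˢ W) (fun x => u p.1 x - u p.2 x) ≤
      m⁻¹ * (2 * volume W * D1 p + 2 * volume V * D2 p) := by
    intro p
    have := DD_cross (A := V) (B := W) (hd p)
    rw [← hm] at this
    rwa [mul_comm, ← div_eq_mul_inv, ENNReal.le_div_iff_mul_le (Or.inl hm0) (Or.inl hmt), mul_comm]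
  have hc' : ∀ p, DD (W ×ˢ V) (fun x => u p.1 x - u p.2 x) ≤
      m⁻¹ * (2 * volume W * D1 p + 2 * volume V * D2 p) := by
    intro p
    have := DD_cross (A := W) (B := V) (hd p)
    rw [inter_comm, ← hm, add_comm] at this
    rwa [mul_comm, ← div_eq_mul_inv, ENNReal.le_div_iff_mul_le (Or.inl hm0) (Or.inl hmt), mul_comm]
  have hlim : Tendsto (fun p => D1 p + D2 p + 2 * (m⁻¹ * (2 * volume W * D1 p +
      2 * volume V * D2 p))) ((𝓕 : Filter ℝ) ×ˢ (𝓕 : Filter ℝ)) (𝓝 0) := by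
    have a1 := ENNReal.Tendsto.const_mul (a := 2 * volume W) h1
      (Or.inr (ENNReal.mul_ne_top (by simp) hWt))
    have a2 := ENNReal.Tendsto.const_mul (a := 2 * volume V) h2
      (Or.inr (ENNReal.mul_ne_top (by simp) hVt))
    have a3 := ENNReal.Tendsto.const_mul (a := m⁻¹) (a1.add a2)
      (Or.inr (ENNReal.inv_ne_top.mpr hm0))
    have a4 := ENNReal.Tendsto.const_mul (a := 2) a3 (Or.inr (by simp))
    have a5 := (h1.add h2).add a4
    simpa using a5
  refine tendsto_of_tendsto_of_tendsto_of_le_of_le tendsto_const_nhds hlim (fun p => zero_le)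
    (fun p => ?_)
  have hset : (V ∪ W) ×ˢ (V ∪ W) = (V ×ˢ V ∪ W ×ˢ W) ∪ (V ×ˢ W ∪ W ×ˢ V) := by
    ext ⟨a, b⟩; simp only [mem_prod, mem_union]; tauto
  simp only [hset]
  refine (lintegral_union_le _ _ _).trans ?_
  refine add_le_add (lintegral_union_le _ _ _) ((lintegral_union_le _ _ _).trans ?_)
  rw [two_mul]
  exact add_le_add (hc p) (hc' p)

lemma QQ_mono {N : ℕ} {𝓕 : Ultrafilter ℝ} {u : ℝ → Euc N → ℝ}
    {V W : Set (Euc N)} (h : V ⊆ W) (h2 : QQ 𝓕 u W) : QQ 𝓕 u V :=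
  tendsto_of_tendsto_of_tendsto_of_le_of_le tendsto_const_nhds h2 (fun p => zero_le)
    (fun p => DD_mono (prod_mono h h) _)

end FracNeumann

namespace FracNeumann

lemma QQ_domain {N : ℕ} (hN : 1 ≤ N) (𝓕 : Ultrafilter ℝ) {s₀ : ℝ} (hs₀ : 0 < s₀)
    (h𝓕 : Ioo s₀ 1 ∈ 𝓕) {Ω : Set (Euc N)} (hΩ : IsLipschitzDomain N Ω)
    (u : ℝ → Euc N → ℝ) (hu : ∀ s, Measurable (u s))
    (hint : ∀ s, IntegrableOn (u s) Ω) {C : ℝ} (hC : 0 ≤ C)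
    (hE : ∀ s ∈ Ioo s₀ 1, ENNReal.ofReal (1 - s) * EE s (Ω ×ˢ Ω) (u s) ≤ ENNReal.ofReal C) :
    QQ 𝓕 u Ω := by
  have hch := exists_chart hN 𝓕 hs₀ h𝓕 hΩ u hu hint hC hE
  obtain ⟨hΩo, hΩb, ⟨⟨x₁, hx₁⟩, hΩp⟩, -⟩ := hΩ
  have hfin : ∀ V : Set (Euc N), V ⊆ Ω → volume V ≠ ⊤ := fun V hV =>
    ne_top_of_le_ne_top hΩb.measure_lt_top.ne (measure_mono hV)
  have hrel : ∀ {x y : Euc N}, x ∈ Ω → y ∈ Ω →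
      ∃ V : Set (Euc N), IsOpen V ∧ V ⊆ Ω ∧ x ∈ V ∧ y ∈ V ∧ QQ 𝓕 u V := by
    apply IsPreconnected.induction₂ hΩp
      (fun x y => ∃ V : Set (Euc N), IsOpen V ∧ V ⊆ Ω ∧ x ∈ V ∧ y ∈ V ∧ QQ 𝓕 u V)
    · intro x hx
      obtain ⟨U, hU, hxU, hQ⟩ := hch x (subset_closure hx)
      filter_upwards [mem_nhdsWithin_of_mem_nhds (hU.mem_nhds hxU), self_mem_nhdsWithin]
        with y hy1 hy2
      exact ⟨U ∩ Ω, hU.inter hΩo, inter_subset_right, ⟨hxU, hx⟩, ⟨hy1, hy2⟩, hQ⟩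
    · rintro x y z - - - ⟨V, hVo, hVΩ, hxV, hyV, hQV⟩ ⟨W, hWo, hWΩ, hyW, hzW, hQW⟩
      exact ⟨V ∪ W, hVo.union hWo, union_subset hVΩ hWΩ, Or.inl hxV, Or.inr hzW,
        QQ_union hu hVo hWo (hfin V hVΩ) (hfin W hWΩ) ⟨y, hyV, hyW⟩ hQV hQW⟩
    · rintro x y - - ⟨V, hVo, hVΩ, hxV, hyV, hQV⟩
      exact ⟨V, hVo, hVΩ, hyV, hxV, hQV⟩
  have hmain : ∃ V : Set (Euc N), IsOpen V ∧ V ⊆ Ω ∧ x₁ ∈ V ∧ closure Ω ∩ Ω ⊆ V ∧ QQ 𝓕 u V := by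
    apply hΩb.isCompact_closure.induction_on
      (p := fun A => ∃ V : Set (Euc N), IsOpen V ∧ V ⊆ Ω ∧ x₁ ∈ V ∧ A ∩ Ω ⊆ V ∧ QQ 𝓕 u V)
    · obtain ⟨V, h1, h2, h3, -, h4⟩ := hrel hx₁ hx₁
      exact ⟨V, h1, h2, h3, by simp, h4⟩
    · rintro A B hAB ⟨V, h1, h2, h3, h4, h5⟩
      exact ⟨V, h1, h2, h3, (inter_subset_inter_left _ hAB).trans h4, h5⟩
    · rintro A B ⟨V, h1, h2, h3, h4, h5⟩ ⟨W, k1, k2, k3, k4, k5⟩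
      refine ⟨V ∪ W, h1.union k1, union_subset h2 k2, Or.inl h3, ?_,
        QQ_union hu h1 k1 (hfin V h2) (hfin W k2) ⟨x₁, h3, k3⟩ h5 k5⟩
      rw [union_inter_distrib_right]
      exact union_subset_union h4 k4
    · intro x hx
      obtain ⟨U, hU, hxU, hQ⟩ := hch x hx
      obtain ⟨y, hyU, hyΩ⟩ := mem_closure_iff.mp hx U hU hxU
      obtain ⟨V, h1, h2, h3, h4, h5⟩ := hrel hx₁ hyΩ
      refine ⟨U, mem_nhdsWithin_of_mem_nhds (hU.mem_nhds hxU), V ∪ (U ∩ Ω),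
        h1.union (hU.inter hΩo), union_subset h2 inter_subset_right, Or.inl h3,
        subset_union_right, QQ_union hu h1 (hU.inter hΩo) (hfin V h2)
          (hfin _ inter_subset_right) ⟨y, h4, hyU, hyΩ⟩ h5 hQ⟩
  obtain ⟨V, -, -, -, h4, h5⟩ := hmain
  exact QQ_mono (fun x hx => h4 ⟨subset_closure hx, hx⟩) h5

/-- The squared L2 distance on `Ω`. -/
def d2 {N : ℕ} (Ω : Set (Euc N)) (u v : Euc N → ℝ) : ℝ≥0∞ :=
  ∫⁻ x in Ω, ENNReal.ofReal ((u x - v x) ^ 2)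

lemma memLp_of_l2sq {N : ℕ} {Ω : Set (Euc N)} {u : Euc N → ℝ} (hu : Measurable u)
    (h : l2sq N Ω u < ⊤) : MemLp u 2 (volume.restrict Ω) := by
  rw [memLp_two_iff_integrable_sq hu.aestronglyMeasurable]
  refine ⟨by fun_prop, ?_⟩
  rw [hasFiniteIntegral_iff_ofReal (ae_of_all _ fun x => sq_nonneg _)]
  exact h

lemma l2sq_of_memLp {N : ℕ} {Ω : Set (Euc N)} {u : Euc N → ℝ}
    (h : MemLp u 2 (volume.restrict Ω)) : l2sq N Ω u < ⊤ := by
  have := h.integrable_sq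
  have h2 := this.2
  rwa [hasFiniteIntegral_iff_ofReal (ae_of_all _ fun x => sq_nonneg _)] at h2

lemma d2_eq {N : ℕ} {Ω : Set (Euc N)} (u v : Euc N → ℝ) :
    d2 Ω u v = eLpNorm (fun x => u x - v x) 2 (volume.restrict Ω) ^ 2 := by
  rw [eLpNorm_eq_lintegral_rpow_enorm_toReal (by simp) (by simp)]
  rw [← ENNReal.rpow_natCast, ← ENNReal.rpow_mul]
  simp only [ENNReal.toReal_ofNat, Nat.cast_ofNat]
  norm_num
  unfold d2
  congr 1; ext x
  rw [← ofReal_norm, ← ENNReal.ofReal_pow (norm_nonneg _), Real.norm_eq_abs, sq_abs]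

lemma exists_limit {N : ℕ} (𝓕 : Ultrafilter ℝ) {Ω : Set (Euc N)} (hΩo : IsOpen Ω)
    (hne : Ω.Nonempty) (hΩt : volume Ω ≠ ⊤)
    (u : ℝ → Euc N → ℝ) (hu : ∀ s, Measurable (u s)) (hl : ∀ s, l2sq N Ω (u s) < ⊤)
    (hmean : ∀ s, ∫ x in Ω, u s x = 0) (hQ : QQ 𝓕 u Ω) :
    ∃ w : Euc N → ℝ, Measurable w ∧ l2sq N Ω w < ⊤ ∧ ∫ x in Ω, w x = 0 ∧
      Tendsto (fun s => d2 Ω (u s) w) 𝓕 (𝓝 0) := by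
  have hm0 : volume Ω ≠ 0 := (hΩo.measure_pos volume hne).ne'
  have : IsFiniteMeasure (volume.restrict Ω) := ⟨by simpa using hΩt.lt_top⟩
  have hL := fun s => memLp_of_l2sq (hu s) (hl s)
  have hI := fun s => (hL s).integrable one_le_two
  -- Cauchy estimate
  have hle : ∀ p : ℝ × ℝ, volume Ω * d2 Ω (u p.1) (u p.2) ≤
      DD (Ω ×ˢ Ω) (fun x => u p.1 x - u p.2 x) := by
    intro p
    rw [DD_prod (v := fun x => u p.1 x - u p.2 x) _ _ ((hu _).sub (hu _))]
    unfold d2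
    rw [← lintegral_const_mul _ (by have := hu p.1; have := hu p.2; fun_prop)]
    apply lintegral_mono
    intro x
    have := jensen_sq (volume.restrict Ω) ((hI p.1).sub (hI p.2)) (u p.1 x - u p.2 x)
    have h0 : ⨍ y in Ω, (u p.1 - u p.2) y = 0 := by
      rw [average_eq]
      simp only [Pi.sub_apply]
      rw [integral_sub (hI _) (hI _), hmean, hmean]; simp
    rw [h0, sub_zero, Measure.restrict_apply_univ] at this
    exact this
  have hd : Tendsto (fun p : ℝ × ℝ => d2 Ω (u p.1) (u p.2))
      ((𝓕 : Filter ℝ) ×ˢ (𝓕 : Filter ℝ)) (𝓝 0) := by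
    have h1 := ENNReal.Tendsto.const_mul (a := (volume Ω)⁻¹) hQ
      (Or.inr (ENNReal.inv_ne_top.mpr hm0))
    rw [mul_zero] at h1
    refine tendsto_of_tendsto_of_tendsto_of_le_of_le tendsto_const_nhds h1 (fun _ => zero_le)
      (fun p => ?_)
    simp only
    rw [mul_comm, ← div_eq_mul_inv, ENNReal.le_div_iff_mul_le (Or.inl hm0) (Or.inl hΩt), mul_comm]
    exact hle p
  set U : ℝ → Lp ℝ 2 (volume.restrict Ω) := fun s => (hL s).toLp (u s) with hU
  have hed : ∀ s t, edist (U s) (U t) ^ 2 = d2 Ω (u s) (u t) := by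
    intro s t
    rw [d2_eq, hU, Lp.edist_toLp_toLp]
    rfl
  have hcau : Cauchy (map U (𝓕 : Filter ℝ)) := by
    rw [cauchy_map_iff]
    refine ⟨𝓕.neBot, ?_⟩
    rw [uniformity_basis_edist_le.tendsto_right_iff]
    intro ε hε
    have h2 : 0 < ε ^ 2 := ENNReal.pow_pos hε 2
    filter_upwards [ENNReal.tendsto_nhds_zero.mp hd (ε ^ 2) h2] with p hp
    rw [← hed] at hp
    exact (ENNReal.pow_le_pow_left_iff two_ne_zero).mp hp
  obtain ⟨W, hW⟩ := CompleteSpace.complete hcau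
  have hWt : Tendsto U 𝓕 (𝓝 W) := hW
  have hlim : Tendsto (fun s => d2 Ω (u s) W) 𝓕 (𝓝 0) := by
    have h1 : Tendsto (fun s => edist (U s) W) 𝓕 (𝓝 0) := by
      exact tendsto_iff_edist_tendsto_0.mp hWt
    have h2 := ENNReal.Tendsto.pow (n := 2) h1
    simp only [ne_eq, OfNat.ofNat_ne_zero, not_false_eq_true, zero_pow] at h2
    refine h2.congr (fun s => ?_)
    rw [d2_eq, Lp.edist_def]
    congr 1
    apply eLpNorm_congr_ae
    filter_upwards [(hL s).coeFn_toLp] with x hx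
    simp [hU, hx]
  refine ⟨W, (Lp.stronglyMeasurable W).measurable, l2sq_of_memLp (Lp.memLp W), ?_, hlim⟩
  have hWI : Integrable W (volume.restrict Ω) := (Lp.memLp W).integrable one_le_two
  have hav : ∀ s, volume Ω * ENNReal.ofReal ((⨍ x in Ω, W x) ^ 2) ≤ d2 Ω (u s) W := by
    intro s
    have := jensen_sq (volume.restrict Ω) ((hI s).sub hWI) 0
    have h0 : ⨍ y in Ω, (u s - W) y = - ⨍ x in Ω, W x := by
      rw [average_eq, average_eq]
      simp only [Pi.sub_apply]
      rw [integral_sub (hI _) hWI, hmean]; simp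
    rw [h0, Measure.restrict_apply_univ] at this
    refine le_trans (le_of_eq (by simp)) (this.trans (le_of_eq ?_))
    unfold d2
    congr 1; ext x; congr 1
    simp only [Pi.sub_apply]; ring
  have h0 : volume Ω * ENNReal.ofReal ((⨍ x in Ω, W x) ^ 2) = 0 :=
    le_antisymm (ge_of_tendsto' hlim hav) zero_le
  rw [mul_eq_zero, or_iff_right hm0, ENNReal.ofReal_eq_zero] at h0
  have h1 : ⨍ x in Ω, W x = 0 := by
    have := sq_nonneg (⨍ x in Ω, W x)
    exact pow_eq_zero_iff two_ne_zero |>.mp (le_antisymm h0 this)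
  rw [average_eq, smul_eq_mul, mul_eq_zero] at h1
  rcases h1 with h1 | h1
  · exfalso
    rw [measureReal_restrict_apply_univ, inv_eq_zero, measureReal_eq_zero_iff hΩt] at h1
    exact hm0 h1
  · exact h1

end FracNeumann

namespace FracNeumann

/-- Pairs whose distance is less than the distance of one of them to the complement. -/
def ZZ {N : ℕ} (Ω : Set (Euc N)) : Set (Euc N × Euc N) :=
  {q | ‖q.1 - q.2‖ < Metric.infDist q.1 Ωᶜ ∨ ‖q.1 - q.2‖ < Metric.infDist q.2 Ωᶜ}

lemma ZZ_midStable {N : ℕ} (Ω : Set (Euc N)) : MidStable (ZZ Ω) := by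
  have hc : Continuous (fun x : Euc N => Metric.infDist x Ωᶜ) := Metric.continuous_infDist_pt _
  refine ⟨?_, ?_, ?_⟩
  · apply IsOpen.measurableSet
    exact (isOpen_lt (by fun_prop) (hc.comp continuous_fst)).union
      (isOpen_lt (by fun_prop) (hc.comp continuous_snd))
  · intro x y h
    simp only [ZZ, mem_ofPred_eq] at h ⊢
    rw [norm_sub_rev y x]
    exact h.symm
  · intro x y h
    simp only [ZZ, mem_ofPred_eq] at h ⊢
    have e1 : x - ((1 / 2 : ℝ) • x + (1 / 2 : ℝ) • y) = (1 / 2 : ℝ) • (x - y) := by module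
    have e2 : y - ((1 / 2 : ℝ) • x + (1 / 2 : ℝ) • y) = -((1 / 2 : ℝ) • (x - y)) := by module
    have n1 : ‖x - ((1 / 2 : ℝ) • x + (1 / 2 : ℝ) • y)‖ = 1 / 2 * ‖x - y‖ := by
      rw [e1, norm_smul]; norm_num
    have n2 : ‖y - ((1 / 2 : ℝ) • x + (1 / 2 : ℝ) • y)‖ = 1 / 2 * ‖x - y‖ := by
      rw [e2, norm_neg, norm_smul]; norm_num
    rw [n1]
    have := norm_nonneg (x - y)
    rcases h with h | h
    · left; linarith
    · right
      have h3 := Metric.infDist_le_infDist_add_dist (s := Ωᶜ) (x := y)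
        (y := (1 / 2 : ℝ) • x + (1 / 2 : ℝ) • y)
      rw [dist_eq_norm, n2] at h3
      linarith

lemma ZZ_aux {N : ℕ} {Ω : Set (Euc N)} {x y : Euc N} (h : ‖x - y‖ < Metric.infDist x Ωᶜ) :
    x ∈ Ω ∧ y ∈ Ω := by
  constructor
  · by_contra hx
    have : Metric.infDist x Ωᶜ = 0 := Metric.infDist_zero_of_mem hx
    have := norm_nonneg (x - y)
    linarith
  · by_contra hy
    have : Metric.infDist x Ωᶜ ≤ dist x y := Metric.infDist_le_dist_of_mem hy
    rw [dist_eq_norm] at this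
    linarith

lemma ZZ_subset {N : ℕ} (Ω : Set (Euc N)) : ZZ Ω ⊆ Ω ×ˢ Ω := by
  rintro ⟨x, y⟩ h
  rcases h with h | h
  · exact ZZ_aux h
  · simp only at h
    rw [norm_sub_rev] at h
    exact (ZZ_aux h).symm

lemma DD_le_d2 {N : ℕ} {Ω : Set (Euc N)} {u w : Euc N → ℝ} (hu : Measurable u)
    (hw : Measurable w) : DD (Ω ×ˢ Ω) (fun x => u x - w x) ≤ 4 * volume Ω * d2 Ω u w := by
  have hm : Measurable (fun x => u x - w x) := hu.sub hw
  rw [DD_prod _ _ hm]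
  have h1 : ∀ x y, ENNReal.ofReal (((u x - w x) - (u y - w y)) ^ 2) ≤
      2 * ENNReal.ofReal ((u x - w x) ^ 2) + 2 * ENNReal.ofReal ((u y - w y) ^ 2) := by
    intro x y
    have := ofReal_sq_le_two (u x - w x) (u y - w y) 0
    simpa using this
  calc _ ≤ ∫⁻ x in Ω, ∫⁻ y in Ω, (2 * ENNReal.ofReal ((u x - w x) ^ 2) +
        2 * ENNReal.ofReal ((u y - w y) ^ 2)) :=
        lintegral_mono fun x => lintegral_mono fun y => h1 x y
    _ = ∫⁻ x in Ω, (2 * volume Ω * ENNReal.ofReal ((u x - w x) ^ 2) + 2 * d2 Ω u w) := by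
        congr 1; ext x
        rw [lintegral_add_left (by fun_prop), setLIntegral_const,
          lintegral_const_mul _ (by fun_prop), mul_right_comm]
        rfl
    _ = _ := by
        rw [lintegral_add_left (by fun_prop), lintegral_const_mul _ (by fun_prop),
          setLIntegral_const]
        unfold d2
        ring

lemma DD_limit {N : ℕ} (hN : 1 ≤ N) (𝓕 : Ultrafilter ℝ) (h1 : (𝓕 : Filter ℝ) ≤ 𝓝 1) {s₀ : ℝ}
    (hs₀ : 0 < s₀)
    (h𝓕 : Ioo s₀ 1 ∈ 𝓕) {Ω : Set (Euc N)} (hΩt : volume Ω ≠ ⊤)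
    (u : ℝ → Euc N → ℝ) (hu : ∀ s, Measurable (u s)) {w : Euc N → ℝ} (hw : Measurable w)
    (hlim : Tendsto (fun s => d2 Ω (u s) w) 𝓕 (𝓝 0)) {C : ℝ} (hC : 0 ≤ C)
    (hE : ∀ s ∈ Ioo s₀ 1, ENNReal.ofReal (1 - s) * EE s (Ω ×ˢ Ω) (u s) ≤ ENNReal.ofReal C)
    {r : ℝ} (hr : 0 < r) :
    DD (ZZ Ω ∩ near N r) w ≤ ENNReal.ofReal (16 * C * r ^ (N + 2)) := by
  have hpt : ∀ s ∈ Ioo s₀ 1, DD (ZZ Ω ∩ near N r) w ≤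
      ENNReal.ofReal (16 * C * r ^ ((N : ℝ) + 2 * s)) + 8 * volume Ω * d2 Ω (u s) w := by
    intro s hs
    have a1 : DD (ZZ Ω ∩ near N r) (u s) ≤
        ENNReal.ofReal (8 * r ^ ((N : ℝ) + 2 * s)) * ENNReal.ofReal C := by
      refine (DD_le_EE hN (ZZ_midStable Ω) (hu s) hr ⟨hs₀.trans hs.1, hs.2⟩).trans ?_
      gcongr
      refine le_trans ?_ (hE s hs)
      gcongr
      exact EE_mono (ZZ_subset Ω) _
    have a2 : DD (ZZ Ω ∩ near N r) (fun x => u s x - w x) ≤ 4 * volume Ω * d2 Ω (u s) w :=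
      (DD_mono (inter_subset_left.trans (ZZ_subset Ω)) _).trans (DD_le_d2 (hu s) hw)
    have a3 : DD (ZZ Ω ∩ near N r) w ≤ 2 * DD (ZZ Ω ∩ near N r) (u s) +
        2 * DD (ZZ Ω ∩ near N r) (fun x => u s x - w x) := by
      unfold DD
      have m1 := dsq_meas (hu s)
      have m2 := dsq_meas (v := fun x => u s x - w x) ((hu s).sub hw)
      rw [← lintegral_const_mul _ m1, ← lintegral_const_mul _ m2,
        ← lintegral_add_left (m1.const_mul 2)]
      apply lintegral_mono
      intro q
      have := ofReal_sq_le_two (u s q.1 - u s q.2) ((u s q.1 - w q.1) - (u s q.2 - w q.2)) 0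
      simp only [sub_zero] at this
      refine le_trans (le_of_eq ?_) this
      congr 1; ring
    refine a3.trans ?_
    calc _ ≤ 2 * (ENNReal.ofReal (8 * r ^ ((N : ℝ) + 2 * s)) * ENNReal.ofReal C) +
          2 * (4 * volume Ω * d2 Ω (u s) w) := by gcongr
      _ = _ := by
          congr 1
          · rw [← ENNReal.ofReal_mul (by positivity)]
            have : (2 : ℝ≥0∞) = ENNReal.ofReal 2 := by simp
            simp only [this]
            rw [← ENNReal.ofReal_mul (by norm_num)]
            congr 1; ring
          · rw [← mul_assoc, ← mul_assoc]; norm_num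
  have hT : Tendsto (fun s : ℝ => ENNReal.ofReal (16 * C * r ^ ((N : ℝ) + 2 * s)) +
      8 * volume Ω * d2 Ω (u s) w) 𝓕 (𝓝 (ENNReal.ofReal (16 * C * r ^ (N + 2)) + 0)) := by
    apply Tendsto.add
    · apply (ENNReal.continuous_ofReal.tendsto _).comp
      have : Continuous (fun s : ℝ => 16 * C * r ^ ((N : ℝ) + 2 * s)) := by
        apply Continuous.mul continuous_const
        exact Continuous.rpow continuous_const (by fun_prop) (fun _ => Or.inl hr.ne')
      have h2 := (this.tendsto 1).mono_left h1
      have e : r ^ (N + 2) = r ^ ((N : ℝ) + 2 * 1) := by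
        rw [← Real.rpow_natCast]; congr 1; push_cast; ring
      rw [e]
      exact h2
    · have := ENNReal.Tendsto.const_mul (a := 8 * volume Ω) hlim
        (Or.inr (ENNReal.mul_ne_top (by simp) hΩt))
      simpa using this
  rw [add_zero] at hT
  refine ge_of_tendsto hT ?_
  filter_upwards [h𝓕] with s hs using hpt s hs

end FracNeumann

namespace FracNeumann

lemma ball_moment {N : ℕ} (e : Euc N) (L : Euc N →L[ℝ] ℝ) :
    ∫ h in Metric.ball e 1, L h = (volume (Metric.ball e 1)).toReal * L e := by
  have hI : IntegrableOn (fun h => L h) (Metric.ball e 1) :=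
    (L.continuous.continuousOn.integrableOn_compact (isCompact_closedBall e 1)).mono_set
      Metric.ball_subset_closedBall
  have hfin : volume (Metric.ball e 1) ≠ ⊤ := measure_ball_lt_top.ne
  have hc : IntegrableOn (fun _ => L e) (Metric.ball e 1) := integrableOn_const hfin
  have h0 : ∫ h in Metric.ball e 1, (L h - L e) = 0 := by
    rw [← integral_indicator measurableSet_ball]
    have e1 : (fun h => (Metric.ball e 1).indicator (fun h => L h - L e) h) =
        fun h => (Metric.ball (0 : Euc N) 1).indicator (fun k => L k) (h - e) := by
      ext h
      simp only [indicator, mem_ball_iff_norm, sub_zero, map_sub]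
    rw [e1, integral_sub_right_eq_self (μ := volume)
      (fun h => (Metric.ball (0 : Euc N) 1).indicator (fun k => L k) h) e]
    have h2 := integral_neg_eq_self (fun h => (Metric.ball (0 : Euc N) 1).indicator
      (fun k => L k) h) volume
    have e2 : (fun h => (Metric.ball (0 : Euc N) 1).indicator (fun k => L k) (-h)) =
        fun h => - (Metric.ball (0 : Euc N) 1).indicator (fun k => L k) h := by
      ext h
      simp only [indicator, mem_ball_iff_norm, sub_zero, map_neg, norm_neg]
      split_ifs <;> simp
    rw [e2, integral_neg] at h2
    linarith
  rw [integral_sub hI hc, setIntegral_const, sub_eq_zero] at h0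
  rw [h0]; rfl

lemma shift_identity {N : ℕ} {w φ : Euc N → ℝ} (hw : Integrable w) (hφ : Continuous φ)
    (hφc : HasCompactSupport φ) (a : Euc N) (c : ℝ) :
    ∫ x, w x * (c * (φ x - φ (x - a))) = ∫ y, (c * (w y - w (y + a))) * φ y := by
  obtain ⟨M, hM⟩ := hφ.bounded_above_of_compact_support hφc
  have i1 : Integrable (fun x => w x * φ x) :=
    hw.mul_bdd hφ.aestronglyMeasurable (ae_of_all _ hM)
  have i2 : Integrable (fun x => w x * φ (x - a)) :=
    hw.mul_bdd (Continuous.aestronglyMeasurable (by fun_prop)) (ae_of_all _ fun x => hM _)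
  have i3 : Integrable (fun x => w (x + a) * φ x) :=
    (hw.comp_add_right a).mul_bdd hφ.aestronglyMeasurable (ae_of_all _ hM)
  have e2 : ∫ x, w x * φ (x - a) = ∫ x, w (x + a) * φ x := by
    rw [← integral_add_right_eq_self (μ := volume) (fun x => w x * φ (x - a)) a]
    simp
  calc _ = ∫ x, c * (w x * φ x - w x * φ (x - a)) := by congr 1; ext x; ring
    _ = c * (∫ x, w x * φ x - w (x + a) * φ x) := by
        rw [integral_const_mul, integral_sub i1 i2, integral_sub i1 i3, e2]
    _ = _ := by rw [← integral_const_mul]; congr 1; ext x; ring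

lemma quot_bound {N : ℕ} {Ω k : Set (Euc N)} (hk : IsCompact k) (hkΩ : k ⊆ Ω)
    {w : Euc N → ℝ} (hw : Measurable w) {K r : ℝ} (hr : 0 < r)
    (hD : DD (ZZ Ω ∩ near N (2 * r)) w ≤ ENNReal.ofReal (K * (2 * r) ^ (N + 2)))
    (hkr : ∀ y ∈ k, 2 * r < Metric.infDist y Ωᶜ) {b : Set (Euc N)} (hbm : MeasurableSet b)
    (hb : ∀ h ∈ b, ‖h‖ < 2) :
    ∫⁻ h in b, ∫⁻ y in k, ENNReal.ofReal ((r⁻¹ * (Ω.indicator w y - Ω.indicator w (y + r • h))) ^ 2)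
      ≤ ENNReal.ofReal (K * 2 ^ (N + 2)) := by
  have hZm : MeasurableSet (ZZ Ω ∩ near N (2 * r)) :=
    (ZZ_midStable Ω).meas.inter (near_meas N _)
  set Ψ : Euc N × Euc N → ℝ≥0∞ := (ZZ Ω ∩ near N (2 * r)).indicator
    (fun q => ENNReal.ofReal ((w q.1 - w q.2) ^ 2)) with hΨ
  have hΨm : Measurable Ψ := (dsq_meas hw).indicator hZm
  have hpt : ∀ h ∈ b, ∀ y ∈ k,
      ENNReal.ofReal ((r⁻¹ * (Ω.indicator w y - Ω.indicator w (y + r • h))) ^ 2) ≤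
      ENNReal.ofReal (r⁻¹ ^ 2) * Ψ (y, y + r • h) := by
    intro h hh y hy
    have hn : ‖y - (y + r • h)‖ < 2 * r := by
      rw [sub_add_cancel_left, norm_neg, norm_smul, Real.norm_of_nonneg hr.le]
      nlinarith [hb h hh]
    have hz : ‖y - (y + r • h)‖ < Metric.infDist y Ωᶜ := hn.trans (hkr y hy)
    have hmem : (y, y + r • h) ∈ ZZ Ω ∩ near N (2 * r) := ⟨Or.inl hz, hn⟩
    have h2 := ZZ_aux hz
    rw [hΨ, indicator_of_mem hmem, indicator_of_mem h2.1, indicator_of_mem h2.2, mul_pow,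
      ENNReal.ofReal_mul (by positivity)]
  calc _ ≤ ∫⁻ h in b, ∫⁻ y in k, ENNReal.ofReal (r⁻¹ ^ 2) * Ψ (y, y + r • h) := by
        apply setLIntegral_mono' hbm
        intro h hh
        apply setLIntegral_mono' hk.measurableSet
        intro y hy
        exact hpt h hh y hy
    _ ≤ ∫⁻ h, ∫⁻ y, ENNReal.ofReal (r⁻¹ ^ 2) * Ψ (y, y + r • h) :=
        (setLIntegral_le_lintegral _ _).trans
          (lintegral_mono fun h => setLIntegral_le_lintegral _ _)
    _ = ∫⁻ y, ∫⁻ h, ENNReal.ofReal (r⁻¹ ^ 2) * Ψ (y, y + r • h) := by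
        rw [lintegral_lintegral_swap]
        apply Measurable.aemeasurable
        fun_prop
    _ = ∫⁻ y, ENNReal.ofReal (r⁻¹ ^ 2) * (ENNReal.ofReal ((r ^ N)⁻¹) * ∫⁻ z, Ψ (y, z)) := by
        congr 1; ext y
        rw [lintegral_const_mul _ (by fun_prop),
          lintegral_affine y hr (fun z => Ψ (y, z)) (by fun_prop)]
    _ = ENNReal.ofReal (r⁻¹ ^ 2) * (ENNReal.ofReal ((r ^ N)⁻¹) *
          DD (ZZ Ω ∩ near N (2 * r)) w) := by
        have m : Measurable (fun y => ∫⁻ z, Ψ (y, z)) := Measurable.lintegral_prod_right hΨm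
        rw [lintegral_const_mul _ (m.const_mul _), lintegral_const_mul _ m,
          ← lintegral_prod _ hΨm.aemeasurable, ← Measure.volume_eq_prod, hΨ,
          lintegral_indicator hZm]
        rfl
    _ ≤ ENNReal.ofReal (r⁻¹ ^ 2) * (ENNReal.ofReal ((r ^ N)⁻¹) *
          ENNReal.ofReal (K * (2 * r) ^ (N + 2))) := by gcongr
    _ = _ := by
        rw [← ENNReal.ofReal_mul (by positivity), ← ENNReal.ofReal_mul (by positivity)]
        congr 1
        field_simp
        ring

lemma quot_integral_bound {N : ℕ} {Ω : Set (Euc N)} (hΩm : MeasurableSet Ω)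
    {w φ : Euc N → ℝ} (hw : Measurable w) (hwI : IntegrableOn w Ω) {K r : ℝ} (hr : 0 < r)
    (hD : DD (ZZ Ω ∩ near N (2 * r)) w ≤ ENNReal.ofReal (K * (2 * r) ^ (N + 2)))
    (hφ : Continuous φ) (hφc : HasCompactSupport φ) (hφΩ : tsupport φ ⊆ Ω)
    (hkr : ∀ y ∈ tsupport φ, 2 * r < Metric.infDist y Ωᶜ) {b : Set (Euc N)}
    (hbm : MeasurableSet b)
    (hb : ∀ h ∈ b, ‖h‖ < 2) :
    ‖∫ h in b, ∫ x in Ω, w x * (r⁻¹ * (φ x - φ (x - r • h)))‖ₑ ≤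
      ENNReal.ofReal (K * 2 ^ (N + 2)) + volume b * ∫⁻ y in Ω, ENNReal.ofReal (φ y ^ 2) := by
  have hw0 : Integrable (Ω.indicator w) := (integrable_indicator_iff hΩm).mpr hwI
  have hw0m : Measurable (Ω.indicator w) := hw.indicator hΩm
  have hkm : MeasurableSet (tsupport φ) := (isClosed_tsupport φ).measurableSet
  have hin : ∀ h, ‖∫ x in Ω, w x * (r⁻¹ * (φ x - φ (x - r • h)))‖ₑ ≤
      (∫⁻ y in tsupport φ, ENNReal.ofReal
        ((r⁻¹ * (Ω.indicator w y - Ω.indicator w (y + r • h))) ^ 2)) +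
        ∫⁻ y in Ω, ENNReal.ofReal (φ y ^ 2) := by
    intro h
    have e1 : ∫ x in Ω, w x * (r⁻¹ * (φ x - φ (x - r • h))) =
        ∫ y, (r⁻¹ * (Ω.indicator w y - Ω.indicator w (y + r • h))) * φ y := by
      rw [← shift_identity hw0 hφ hφc, ← integral_indicator hΩm]
      congr 1; ext x
      by_cases hx : x ∈ Ω <;> simp [hx]
    have e2 : ∫ y, (r⁻¹ * (Ω.indicator w y - Ω.indicator w (y + r • h))) * φ y =
        ∫ y in tsupport φ, (r⁻¹ * (Ω.indicator w y - Ω.indicator w (y + r • h))) * φ y := by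
      symm
      apply setIntegral_eq_integral_of_forall_compl_eq_zero
      intro x hx
      rw [image_eq_zero_of_notMem_tsupport hx, mul_zero]
    rw [e1, e2]
    refine (enorm_integral_le_lintegral_enorm _).trans ?_
    calc _ ≤ ∫⁻ y in tsupport φ, (ENNReal.ofReal
          ((r⁻¹ * (Ω.indicator w y - Ω.indicator w (y + r • h))) ^ 2) +
            ENNReal.ofReal (φ y ^ 2)) := by
          apply lintegral_mono
          intro y
          simp only
          rw [← ENNReal.ofReal_add (by positivity) (by positivity), ← ofReal_norm]
          apply ENNReal.ofReal_le_ofReal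
          rw [Real.norm_eq_abs, abs_le]
          constructor <;> nlinarith [sq_nonneg ((r⁻¹ * (Ω.indicator w y -
            Ω.indicator w (y + r • h))) + φ y), sq_nonneg ((r⁻¹ * (Ω.indicator w y -
            Ω.indicator w (y + r • h))) - φ y)]
      _ = (∫⁻ y in tsupport φ, ENNReal.ofReal
            ((r⁻¹ * (Ω.indicator w y - Ω.indicator w (y + r • h))) ^ 2)) +
            ∫⁻ y in tsupport φ, ENNReal.ofReal (φ y ^ 2) := by
          rw [lintegral_add_left (by fun_prop)]
      _ ≤ _ := by
          gcongr
  calc _ ≤ ∫⁻ h in b, ‖∫ x in Ω, w x * (r⁻¹ * (φ x - φ (x - r • h)))‖ₑ :=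
        enorm_integral_le_lintegral_enorm _
    _ ≤ ∫⁻ h in b, ((∫⁻ y in tsupport φ, ENNReal.ofReal
        ((r⁻¹ * (Ω.indicator w y - Ω.indicator w (y + r • h))) ^ 2)) +
        ∫⁻ y in Ω, ENNReal.ofReal (φ y ^ 2)) := lintegral_mono hin
    _ = (∫⁻ h in b, ∫⁻ y in tsupport φ, ENNReal.ofReal
        ((r⁻¹ * (Ω.indicator w y - Ω.indicator w (y + r • h))) ^ 2)) +
        volume b * ∫⁻ y in Ω, ENNReal.ofReal (φ y ^ 2) := by
        rw [lintegral_add_right _ measurable_const, setLIntegral_const, mul_comm (volume b)]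
    _ ≤ _ := by
        gcongr
        exact quot_bound hφc hφΩ hw hr hD hkr hbm hb

end FracNeumann

namespace FracNeumann

lemma weak_bound {N : ℕ} {Ω : Set (Euc N)} (hΩo : IsOpen Ω) (hΩc : Ωᶜ.Nonempty)
    {w φ : Euc N → ℝ} (hw : Measurable w) (hwI : IntegrableOn w Ω) {K : ℝ} (hK : 0 ≤ K)
    (hD : ∀ r : ℝ, 0 < r → DD (ZZ Ω ∩ near N r) w ≤ ENNReal.ofReal (K * r ^ (N + 2)))
    (hφ : ContDiff ℝ (⊤ : ℕ∞) φ) (hφc : HasCompactSupport φ) (hφΩ : tsupport φ ⊆ Ω)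
    {e : Euc N} (he : ‖e‖ = 1) :
    (volume (Metric.ball e 1)).toReal * |∫ x in Ω, w x * fderiv ℝ φ x e| ≤
      K * 2 ^ (N + 2) + (volume (Metric.ball e 1)).toReal * ∫ x in Ω, φ x ^ 2 := by
  have hΩm := hΩo.measurableSet
  have hφcont : Continuous φ := hφ.continuous
  have hb : ∀ h ∈ Metric.ball e 1, ‖h‖ < 2 := by
    intro h hh
    rw [mem_ball_iff_norm] at hh
    calc ‖h‖ = ‖(h - e) + e‖ := by simp
      _ ≤ ‖h - e‖ + ‖e‖ := norm_add_le _ _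
      _ < 2 := by linarith
  have hd : Differentiable ℝ φ := hφ.differentiable (by simp)
  have hdc : Continuous (fderiv ℝ φ) := hφ.continuous_fderiv (by simp)
  obtain ⟨M, hM⟩ := hdc.bounded_above_of_compact_support (hφc.fderiv ℝ)
  have hM0 : 0 ≤ M := (norm_nonneg _).trans (hM 0)
  have hlip : ∀ x y, ‖φ x - φ y‖ ≤ M * ‖x - y‖ := fun x y =>
    convex_univ.norm_image_sub_le_of_norm_fderiv_le (fun z _ => hd z) (fun z _ => hM z)
      (mem_univ y) (mem_univ x)
  -- distance of the support from the complement
  obtain ⟨δ, hδ, hδk⟩ : ∃ δ : ℝ, 0 < δ ∧ ∀ y ∈ tsupport φ, δ < Metric.infDist y Ωᶜ := by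
    rcases (tsupport φ).eq_empty_or_nonempty with h0 | h0
    · exact ⟨1, one_pos, by simp [h0]⟩
    · obtain ⟨y₀, hy₀, hmin⟩ := IsCompact.exists_isMinOn hφc h0
        (Metric.continuous_infDist_pt Ωᶜ).continuousOn
      have hp : 0 < Metric.infDist y₀ Ωᶜ :=
        (hΩo.isClosed_compl.notMem_iff_infDist_pos hΩc).1 (fun h => h (hφΩ hy₀))
      refine ⟨Metric.infDist y₀ Ωᶜ / 2, by positivity, fun y hy => ?_⟩
      have := hmin hy
      simp only [mem_ofPred_eq] at this
      linarith
  have hfinb : volume (Metric.ball e 1) ≠ ⊤ := measure_ball_lt_top.ne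
  let ν : Measure (Euc N) := volume.restrict (Metric.ball e 1)
  let μ : Measure (Euc N × Euc N) := (volume.restrict Ω).prod ν
  have hνf : IsFiniteMeasure ν := ⟨by simp [ν, measure_ball_lt_top]⟩
  let G : ℝ → Euc N × Euc N → ℝ := fun r q => w q.1 * (r⁻¹ * (φ q.1 - φ (q.1 - r • q.2)))
  have hGm : ∀ r, Measurable (G r) := by
    intro r
    have : Measurable φ := hφcont.measurable
    fun_prop
  have hbi : Integrable (fun q : Euc N × Euc N => |w q.1| * (2 * M)) μ := by
    have := (hwI.abs.mul_const (2 * M)).comp_fst ν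
    exact this
  have haeb : ∀ᵐ q ∂μ, q.2 ∈ Metric.ball e 1 := by
    have h1 : ∀ᵐ h ∂ν, h ∈ Metric.ball e 1 := ae_restrict_mem measurableSet_ball
    exact Measure.quasiMeasurePreserving_snd.ae h1
  have hbound : ∀ r : ℝ, 0 < r → ∀ᵐ q ∂μ, ‖G r q‖ ≤ |w q.1| * (2 * M) := by
    intro r hr
    filter_upwards [haeb] with q hq
    have h1 := hlip q.1 (q.1 - r • q.2)
    have h2 := hb _ hq
    rw [sub_sub_cancel, norm_smul, Real.norm_of_nonneg hr.le] at h1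
    simp only [G, norm_mul, Real.norm_eq_abs] at h1 ⊢
    rw [abs_of_pos (inv_pos.2 hr)]
    refine mul_le_mul_of_nonneg_left ?_ (abs_nonneg _)
    rw [inv_mul_le_iff₀ hr]
    refine h1.trans ?_
    have : M * (r * ‖q.2‖) ≤ M * (r * 2) := by gcongr
    linarith
  have hGi : ∀ r : ℝ, 0 < r → Integrable (G r) μ := fun r hr =>
    hbi.mono' (hGm r).aestronglyMeasurable (hbound r hr)
  have hlim : Tendsto (fun r => ∫ q, G r q ∂μ) (𝓝[>] 0)
      (𝓝 (∫ q, w q.1 * fderiv ℝ φ q.1 q.2 ∂μ)) := by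
    refine tendsto_integral_filter_of_dominated_convergence (fun q => |w q.1| * (2 * M))
      (Eventually.of_forall fun r => (hGm r).aestronglyMeasurable) ?_ hbi ?_
    · filter_upwards [self_mem_nhdsWithin] with r hr
      exact hbound r hr
    · refine ae_of_all _ fun q => ?_
      refine Tendsto.const_mul _ ?_
      have hder : HasDerivAt (fun r : ℝ => φ (q.1 - r • q.2)) (- fderiv ℝ φ q.1 q.2) 0 := by
        have h1 : HasDerivAt (fun r : ℝ => q.1 - r • q.2) (-q.2) 0 := by
          simpa using ((hasDerivAt_id (0:ℝ)).smul_const q.2).const_sub q.1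
        have h2 : HasFDerivAt φ (fderiv ℝ φ q.1) (q.1 - (0:ℝ) • q.2) := by
          simpa using (hd q.1).hasFDerivAt
        have h4 := h2.comp_hasDerivAt (0:ℝ) h1
        rw [map_neg] at h4
        exact h4
      have h3 := hder.tendsto_slope_zero_right.neg
      simp only [zero_add, zero_smul, sub_zero, neg_neg, smul_eq_mul] at h3
      refine h3.congr fun r => ?_
      ring
  have hid : ∫ q, w q.1 * fderiv ℝ φ q.1 q.2 ∂μ =
      (volume (Metric.ball e 1)).toReal * ∫ x in Ω, w x * fderiv ℝ φ x e := by
    have hI : Integrable (fun q : Euc N × Euc N => w q.1 * fderiv ℝ φ q.1 q.2) μ := by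
      refine hbi.mono' ?_ ?_
      · have h1 : Continuous (fun q : Euc N × Euc N => fderiv ℝ φ q.1 q.2) := by fun_prop
        exact ((hw.comp measurable_fst).mul h1.measurable).aestronglyMeasurable
      · filter_upwards [haeb] with q hq
        rw [norm_mul, Real.norm_eq_abs]
        gcongr
        calc _ ≤ ‖fderiv ℝ φ q.1‖ * ‖q.2‖ := ContinuousLinearMap.le_opNorm _ _
          _ ≤ M * 2 := by gcongr; exact hM _; exact (hb _ hq).le
          _ = 2 * M := by ring
    rw [integral_prod _ hI, ← integral_const_mul]
    congr 1; ext x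
    simp only
    rw [integral_const_mul, ball_moment]
    ring
  rw [hid] at hlim
  have hφ2 : ∫⁻ y in Ω, ENNReal.ofReal (φ y ^ 2) = ENNReal.ofReal (∫ x in Ω, φ x ^ 2) := by
    rw [ofReal_integral_eq_lintegral_ofReal]
    · apply Integrable.integrableOn
      apply Continuous.integrable_of_hasCompactSupport (by fun_prop)
      exact hφc.comp_left (g := fun t : ℝ => t ^ 2) (by simp)
    · exact ae_of_all _ fun x => by positivity
  have hev : ∀ᶠ r in 𝓝[>] (0:ℝ), |∫ q, G r q ∂μ| ≤
      K * 2 ^ (N + 2) + (volume (Metric.ball e 1)).toReal * ∫ x in Ω, φ x ^ 2 := by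
    filter_upwards [self_mem_nhdsWithin, Ioo_mem_nhdsGT (show (0:ℝ) < δ / 2 by positivity)]
      with r hr hr2
    have hr0 : 0 < r := hr
    have hq := quot_integral_bound hΩm hw hwI hr0 (hD (2 * r) (by positivity)) hφcont hφc hφΩ
      (fun y hy => lt_trans (by linarith [hr2.2]) (hδk y hy)) measurableSet_ball hb
    have e1 : ∫ q, G r q ∂μ = ∫ h in Metric.ball e 1, ∫ x in Ω,
        w x * (r⁻¹ * (φ x - φ (x - r • h))) := integral_prod_symm _ (hGi r hr0)
    rw [← e1, hφ2, ← ENNReal.ofReal_toReal hfinb, ← ENNReal.ofReal_mul ENNReal.toReal_nonneg,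
      ← ENNReal.ofReal_add (by positivity) (by positivity), ← ofReal_norm] at hq
    exact (ENNReal.ofReal_le_ofReal_iff (by positivity)).1 hq
  have := le_of_tendsto hlim.abs hev
  rwa [abs_mul, abs_of_nonneg ENNReal.toReal_nonneg] at this

end FracNeumann

namespace FracNeumann

lemma scaling_bound {a n A B : ℝ} (hB : 0 ≤ B) (hA : 0 ≤ A) (hn : 0 ≤ n)
    (h : ∀ t : ℝ, 0 < t → t * a ≤ A + B * (t * n) ^ 2) : a ≤ (A + B) * n := by
  rcases hn.eq_or_lt with h0 | h0
  · subst h0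
    by_contra hc
    push Not at hc
    simp only [mul_zero] at hc
    have := h ((A + 1) / a) (by positivity)
    rw [div_mul_cancel₀ _ hc.ne'] at this
    simp at this
    linarith
  · have := h n⁻¹ (by positivity)
    rw [inv_mul_cancel₀ h0.ne', inv_mul_le_iff₀ h0] at this
    linarith

lemma riesz_aux {V H : Type*} [AddCommGroup V] [Module ℝ V] [NormedAddCommGroup H]
    [InnerProductSpace ℝ H] [CompleteSpace H] (J : V →ₗ[ℝ] H) (Λ : V →ₗ[ℝ] ℝ) (c : ℝ)
    (h : ∀ v, |Λ v| ≤ c * ‖J v‖) : ∃ g : H, ∀ v, Λ v = inner ℝ g (J v) := by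
  obtain ⟨T, hT⟩ := J.rangeRestrict.exists_rightInverse_of_surjective
    (LinearMap.range_rangeRestrict J)
  have hT2 : ∀ y, J (T y) = y := fun y => by
    have := LinearMap.congr_fun hT y
    exact congrArg Subtype.val this
  let ℓ : LinearMap.range J →L[ℝ] ℝ := (Λ ∘ₗ T).mkContinuous c (fun y => by
    have := h (T y)
    rw [hT2] at this
    exact this)
  obtain ⟨L, hL, -⟩ := exists_extension_norm_eq (LinearMap.range J) ℓ
  refine ⟨(InnerProductSpace.toDual ℝ H).symm L, fun v => ?_⟩
  rw [InnerProductSpace.toDual_symm_apply]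
  have h1 := hL ⟨J v, LinearMap.mem_range_self J v⟩
  simp only at h1
  rw [h1]
  change Λ v = Λ (T _)
  have h2 := h (v - T ⟨J v, LinearMap.mem_range_self J v⟩)
  rw [map_sub, map_sub, hT2, sub_self, norm_zero, mul_zero] at h2
  have := abs_nonpos_iff.1 h2
  linarith

end FracNeumann

namespace FracNeumann

/-- The space of test functions. -/
def testV (N : ℕ) (Ω : Set (Euc N)) : Submodule ℝ (Euc N → ℝ) where
  carrier := {φ | ContDiff ℝ (⊤ : ℕ∞) φ ∧ HasCompactSupport φ ∧ tsupport φ ⊆ Ω}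
  add_mem' := by
    rintro a b ⟨h1, h2, h3⟩ ⟨k1, k2, k3⟩
    exact ⟨h1.add k1, h2.add k2, (tsupport_add a b).trans (union_subset h3 k3)⟩
  zero_mem' := by
    refine ⟨contDiff_const, HasCompactSupport.zero, ?_⟩
    simp [tsupport]
  smul_mem' := by
    rintro c a ⟨h1, h2, h3⟩
    refine ⟨h1.const_smul c, h2.smul_left (f := fun _ => c), ?_⟩
    exact (closure_mono (Function.support_const_smul_subset c a)).trans h3

lemma testV_memLp {N : ℕ} {Ω : Set (Euc N)} {φ : Euc N → ℝ} (h : φ ∈ testV N Ω) :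
    MemLp φ 2 (volume.restrict Ω) :=
  (h.1.continuous.memLp_of_hasCompactSupport h.2.1).restrict Ω

/-- Test functions as elements of `L²`. -/
def testJ (N : ℕ) (Ω : Set (Euc N)) : testV N Ω →ₗ[ℝ] Lp ℝ 2 (volume.restrict Ω) where
  toFun φ := (testV_memLp φ.2).toLp φ.1
  map_add' a b := MemLp.toLp_add (testV_memLp a.2) (testV_memLp b.2)
  map_smul' c a := MemLp.toLp_const_smul c (testV_memLp a.2)

lemma test_int {N : ℕ} {Ω : Set (Euc N)} {w : Euc N → ℝ} (hwI : IntegrableOn w Ω)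
    {φ : Euc N → ℝ} (h : φ ∈ testV N Ω) (e : Euc N) :
    IntegrableOn (fun x => w x * fderiv ℝ φ x e) Ω := by
  have hdc : Continuous (fderiv ℝ φ) := h.1.continuous_fderiv (by simp)
  obtain ⟨M, hM⟩ := hdc.bounded_above_of_compact_support (h.2.1.fderiv ℝ)
  refine Integrable.mul_bdd (c := M * ‖e‖) hwI (Continuous.aestronglyMeasurable (by fun_prop))
    (ae_of_all _ fun x => ?_)
  exact (ContinuousLinearMap.le_opNorm _ _).trans (by gcongr; exact hM x)

/-- The distributional derivative. -/
def testL {N : ℕ} {Ω : Set (Euc N)} {w : Euc N → ℝ} (hwI : IntegrableOn w Ω) (e : Euc N) :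
    testV N Ω →ₗ[ℝ] ℝ where
  toFun φ := ∫ x in Ω, w x * fderiv ℝ φ.1 x e
  map_add' a b := by
    rw [← integral_add (test_int hwI a.2 e) (test_int hwI b.2 e)]
    congr 1; ext x
    have h1 : DifferentiableAt ℝ a.1 x := a.2.1.differentiable (by simp) x
    have h2 : DifferentiableAt ℝ b.1 x := b.2.1.differentiable (by simp) x
    rw [Submodule.coe_add, fderiv_add h1 h2]
    simp only [ContinuousLinearMap.add_apply]
    ring
  map_smul' c a := by
    rw [RingHom.id_apply, smul_eq_mul, ← integral_const_mul]
    congr 1; ext x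
    have h1 : DifferentiableAt ℝ a.1 x := a.2.1.differentiable (by simp) x
    rw [Submodule.coe_smul, fderiv_const_smul h1]
    simp only [ContinuousLinearMap.smul_apply, smul_eq_mul]
    ring

lemma testJ_norm {N : ℕ} {Ω : Set (Euc N)} (φ : testV N Ω) :
    ‖testJ N Ω φ‖ ^ 2 = ∫ x in Ω, φ.1 x ^ 2 := by
  rw [← real_inner_self_eq_norm_sq, L2.inner_def]
  apply integral_congr_ae
  filter_upwards [(testV_memLp φ.2).coeFn_toLp] with x hx
  change inner ℝ ((testV_memLp φ.2).toLp φ.1 x) ((testV_memLp φ.2).toLp φ.1 x) = _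
  rw [hx, real_inner_self_eq_norm_sq, Real.norm_eq_abs, sq_abs]

lemma exists_weak_deriv {N : ℕ} {Ω : Set (Euc N)} (hΩo : IsOpen Ω) (hΩc : Ωᶜ.Nonempty)
    {w : Euc N → ℝ} (hw : Measurable w) (hwI : IntegrableOn w Ω) {K : ℝ} (hK : 0 ≤ K)
    (hD : ∀ r : ℝ, 0 < r → DD (ZZ Ω ∩ near N r) w ≤ ENNReal.ofReal (K * r ^ (N + 2)))
    {e : Euc N} (he : ‖e‖ = 1) :
    ∃ g : Euc N → ℝ, Measurable g ∧ MemLp g 2 (volume.restrict Ω) ∧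
      ∀ φ ∈ testV N Ω, ∫ x in Ω, w x * fderiv ℝ φ x e = - ∫ x in Ω, g x * φ x := by
  let β := (volume (Metric.ball e 1)).toReal
  have hβ : 0 < β := ENNReal.toReal_pos (Metric.measure_ball_pos _ _ one_pos).ne'
    measure_ball_lt_top.ne
  have hbd : ∀ φ : testV N Ω, |testL hwI e φ| ≤
      (K * 2 ^ (N + 2) / β + 1) * ‖testJ N Ω φ‖ := by
    intro φ
    refine scaling_bound zero_le_one (by positivity) (norm_nonneg _) fun t ht => ?_
    have h1 := (t • φ).2
    have h2 := weak_bound hΩo hΩc hw hwI hK hD h1.1 h1.2.1 h1.2.2 he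
    have h3 : |testL hwI e (t • φ)| = t * |testL hwI e φ| := by
      rw [map_smul, smul_eq_mul, abs_mul, abs_of_pos ht]
    have h4 : ‖testJ N Ω (t • φ)‖ = t * ‖testJ N Ω φ‖ := by
      rw [map_smul, norm_smul, Real.norm_of_nonneg ht.le]
    rw [← h3, ← h4, testJ_norm, one_mul]
    change β * |testL hwI e (t • φ)| ≤ _ at h2
    rw [mul_comm, ← le_div_iff₀ hβ] at h2
    refine h2.trans (le_of_eq ?_)
    rw [add_div, mul_div_cancel_left₀ _ hβ.ne']
  obtain ⟨g, hg⟩ := riesz_aux (testJ N Ω) (testL hwI e) _ hbd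
  have hgm : AEMeasurable (g : Euc N → ℝ) (volume.restrict Ω) :=
    (Lp.aestronglyMeasurable g).aemeasurable
  have hgL : MemLp (g : Euc N → ℝ) 2 (volume.restrict Ω) := Lp.memLp g
  refine ⟨fun x => - hgm.mk _ x, hgm.measurable_mk.neg,
    ((memLp_congr_ae hgm.ae_eq_mk).1 hgL).neg, fun φ hφ => ?_⟩
  have h1 := hg ⟨φ, hφ⟩
  rw [L2.inner_def] at h1
  change ∫ x in Ω, w x * fderiv ℝ φ x e = _ at h1
  rw [h1, ← integral_neg]
  apply integral_congr_ae
  filter_upwards [(testV_memLp hφ).coeFn_toLp, hgm.ae_eq_mk] with x hx hx2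
  change inner ℝ (g x) ((testV_memLp hφ).toLp φ x) = _
  rw [hx, hx2]
  simp [mul_comm]

lemma memH1_of_DD {N : ℕ} {Ω : Set (Euc N)} (hΩo : IsOpen Ω) (hΩc : Ωᶜ.Nonempty)
    {w : Euc N → ℝ} (hw : Measurable w) (hwI : IntegrableOn w Ω) (hl : l2sq N Ω w < ⊤)
    {K : ℝ} (hK : 0 ≤ K)
    (hD : ∀ r : ℝ, 0 < r → DD (ZZ Ω ∩ near N r) w ≤ ENNReal.ofReal (K * r ^ (N + 2))) :
    memH1 N Ω w := by
  have h : ∀ i : Fin N, ∃ g : Euc N → ℝ, Measurable g ∧ MemLp g 2 (volume.restrict Ω) ∧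
      ∀ φ ∈ testV N Ω, ∫ x in Ω, w x * fderiv ℝ φ x (EuclideanSpace.single i 1) =
        - ∫ x in Ω, g x * φ x := fun i =>
    exists_weak_deriv hΩo hΩc hw hwI hK hD (by simp)
  choose g hgm hgL hg using h
  refine ⟨hw, hl, fun x => WithLp.toLp 2 (fun i => g i x), ?_, ?_, ?_⟩
  · exact (WithLp.measurable_toLp 2 _).comp (measurable_pi_lambda _ hgm)
  · have e1 : ∀ x, ENNReal.ofReal (‖WithLp.toLp 2 (fun i => g i x)‖ ^ 2) =
        ∑ i, ENNReal.ofReal ((g i x) ^ 2) := by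
      intro x
      rw [EuclideanSpace.norm_sq_eq, ENNReal.ofReal_sum_of_nonneg (fun i _ => by positivity)]
      simp
    simp_rw [e1]
    rw [lintegral_finset_sum _ (fun i _ => by have := hgm i; fun_prop)]
    rw [ENNReal.sum_lt_top]
    intro i _
    exact l2sq_of_memLp (hgL i)
  · intro φ h1 h2 h3 i
    exact hg i φ ⟨h1, h2, h3⟩

end FracNeumann

namespace FracNeumann

lemma exists_seq (𝓕 : Filter ℝ) [NeBot 𝓕] (h𝓕 : 𝓕 ≤ 𝓝[<] 1) {f : ℝ → ℝ≥0∞}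
    (hf : Tendsto f 𝓕 (𝓝 0)) {s₀ : ℝ} (hs₀ : s₀ < 1) :
    ∃ sk : ℕ → ℝ, StrictMono sk ∧ (∀ k, sk k ∈ Ioo s₀ 1) ∧ Tendsto sk atTop (𝓝 1) ∧
      Tendsto (fun k => f (sk k)) atTop (𝓝 0) := by
  have h : ∀ (k : ℕ) (t : ℝ), ∃ s, t < 1 → (t < s ∧ s < 1 ∧ 1 - 1 / ((k : ℝ) + 1) < s ∧
      f s < ((k : ℝ≥0∞) + 1)⁻¹) := by
    intro k t
    by_cases ht : t < 1
    · have e1 : ∀ᶠ s in 𝓕, f s < ((k : ℝ≥0∞) + 1)⁻¹ :=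
        hf (Iio_mem_nhds (by
          rw [ENNReal.inv_pos]
          exact ENNReal.add_ne_top.2 ⟨ENNReal.natCast_ne_top k, ENNReal.one_ne_top⟩))
      have e2 : ∀ᶠ s in 𝓕, s ∈ Ioo t 1 := h𝓕 (Ioo_mem_nhdsLT ht)
      have e3 : ∀ᶠ s in 𝓕, s ∈ Ioo (1 - 1 / ((k : ℝ) + 1)) 1 := h𝓕 (Ioo_mem_nhdsLT (by
        have : 0 < 1 / ((k : ℝ) + 1) := by positivity
        linarith))
      obtain ⟨s, a, b, c⟩ := (e1.and (e2.and e3)).exists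
      exact ⟨s, fun _ => ⟨b.1, b.2, c.1, a⟩⟩
    · exact ⟨0, fun h => absurd h ht⟩
  choose F hF using h
  let sk : ℕ → ℝ := fun k => Nat.rec (F 0 s₀) (fun k t => F (k + 1) t) k
  have h0 : sk 0 = F 0 s₀ := rfl
  have h1 : ∀ k, sk (k + 1) = F (k + 1) (sk k) := fun k => rfl
  have hlt : ∀ k, sk k < 1 := by
    intro k
    induction k with
    | zero => rw [h0]; exact (hF 0 s₀ hs₀).2.1
    | succ k ih => rw [h1]; exact (hF (k + 1) _ ih).2.1
  have hmono : StrictMono sk := strictMono_nat_of_lt_succ fun k => by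
    rw [h1]; exact (hF (k + 1) _ (hlt k)).1
  have hprop : ∀ k : ℕ, 1 - 1 / ((k : ℝ) + 1) < sk k ∧ f (sk k) < ((k : ℝ≥0∞) + 1)⁻¹ := by
    intro k
    cases k with
    | zero => rw [h0]; exact (hF 0 s₀ hs₀).2.2
    | succ k => rw [h1]; exact (hF (k + 1) _ (hlt k)).2.2
  refine ⟨sk, hmono, fun k => ⟨?_, hlt k⟩, ?_, ?_⟩
  · calc s₀ < sk 0 := (hF 0 s₀ hs₀).1
      _ ≤ sk k := hmono.monotone (Nat.zero_le k)
  · have t1 : Tendsto (fun k : ℕ => 1 - 1 / ((k : ℝ) + 1)) atTop (𝓝 1) := by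
      simpa using (tendsto_one_div_add_atTop_nhds_zero_nat (𝕜 := ℝ)).const_sub 1
    exact tendsto_of_tendsto_of_tendsto_of_le_of_le t1 tendsto_const_nhds
      (fun k => (hprop k).1.le) (fun k => (hlt k).le)
  · have t2 : Tendsto (fun k : ℕ => ((k : ℝ≥0∞) + 1)⁻¹) atTop (𝓝 0) := by
      have := (tendsto_add_atTop_iff_nat 1).2 ENNReal.tendsto_inv_nat_nhds_zero
      simpa using this
    exact tendsto_of_tendsto_of_tendsto_of_le_of_le tendsto_const_nhds t2
      (fun k => zero_le) (fun k => (hprop k).2.le)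

end FracNeumann

namespace FracNeumann

/-- Lemma 3.2: a family with uniformly bounded scaled seminorms of the
`s`-minimal extensions is relatively compact in `L²(Ω)`, with limit in `H¹(Ω) ∩ L²₀(Ω)`. -/
theorem statement8 (N : ℕ) (hN : 2 ≤ N) (Ω : Set (Euc N)) (hΩ : IsLipschitzDomain N Ω)
    (s₀ : ℝ) (hs₀ : s₀ ∈ Set.Ioo (0 : ℝ) 1)
    (u ut : ℝ → Euc N → ℝ)
    (hu : ∀ s ∈ Set.Ioo s₀ 1, memHsOn N s Ω (u s) ∧ (∫ x in Ω, u s x) = 0)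
    (hut : ∀ s ∈ Set.Ioo s₀ 1, memHs N s Ω (ut s) ∧ ut s =ᵐ[volume.restrict Ω] u s ∧
      ∀ v : Euc N → ℝ, memHs N s Ω v → v =ᵐ[volume.restrict Ω] u s →
        semiSq N s Ω (ut s) ≤ semiSq N s Ω v)
    (C : ℝ) (hC : 0 < C)
    (hbd : ∀ s ∈ Set.Ioo s₀ 1,
      ENNReal.ofReal (1 - s) * semiSq N s Ω (ut s) ≤ ENNReal.ofReal C) :
    ∃ sk : ℕ → ℝ, StrictMono sk ∧ (∀ k, sk k ∈ Set.Ioo s₀ 1) ∧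
      Filter.Tendsto sk Filter.atTop (nhds 1) ∧
      ∃ w : Euc N → ℝ, memH1 N Ω w ∧ (∫ x in Ω, w x) = 0 ∧
        Filter.Tendsto (fun k => ∫ x in Ω, (u (sk k) x - w x) ^ 2)
          Filter.atTop (nhds 0) := by
  obtain ⟨hs0, hs1⟩ := hs₀
  have hN1 : 1 ≤ N := by omega
  obtain ⟨hΩo, hΩb, ⟨hne, -⟩, -⟩ := id hΩ
  have hΩt : volume Ω ≠ ⊤ := hΩb.measure_lt_top.ne
  have hfm : IsFiniteMeasure (volume.restrict Ω) := ⟨by simpa using hΩt.lt_top⟩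
  have hΩc : Ωᶜ.Nonempty := by
    rw [nonempty_compl]
    intro h
    rw [h] at hΩb
    have : Nontrivial (Euc N) := by
      have : Nonempty (Fin N) := ⟨⟨0, by omega⟩⟩
      infer_instance
    exact NormedSpace.unbounded_univ ℝ (Euc N) hΩb
  let v : ℝ → Euc N → ℝ := fun s => by
    classical exact if s ∈ Ioo s₀ 1 then ut s else 0
  have hv1 : ∀ s ∈ Ioo s₀ 1, v s = ut s := fun s hs => if_pos hs
  have hv0 : ∀ s, s ∉ Ioo s₀ 1 → v s = 0 := fun s hs => if_neg hs
  have hvm : ∀ s, Measurable (v s) := by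
    intro s
    by_cases hs : s ∈ Ioo s₀ 1
    · rw [hv1 s hs]; exact (hut s hs).1.1
    · rw [hv0 s hs]; exact measurable_const
  have hvl : ∀ s, l2sq N Ω (v s) < ⊤ := by
    intro s
    by_cases hs : s ∈ Ioo s₀ 1
    · rw [hv1 s hs]; exact (hut s hs).1.2.1
    · rw [hv0 s hs]; simp [l2sq]
  have hvmean : ∀ s, ∫ x in Ω, v s x = 0 := by
    intro s
    by_cases hs : s ∈ Ioo s₀ 1
    · rw [hv1 s hs, integral_congr_ae (hut s hs).2.1]; exact (hu s hs).2
    · rw [hv0 s hs]; simp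
  have hvI : ∀ s, IntegrableOn (v s) Ω := fun s =>
    (memLp_of_l2sq (hvm s) (hvl s)).integrable one_le_two
  have hE : ∀ s ∈ Ioo s₀ 1, ENNReal.ofReal (1 - s) * EE s (Ω ×ˢ Ω) (v s) ≤
      ENNReal.ofReal C := by
    intro s hs
    refine le_trans ?_ (hbd s hs)
    rw [hv1 s hs]
    refine mul_le_mul_right ?_ _
    exact lintegral_mono_set (fun q hq => Or.inl (subset_closure hq.1))
  let 𝓕 : Ultrafilter ℝ := Ultrafilter.of (𝓝[<] (1:ℝ))
  have h𝓕 : (𝓕 : Filter ℝ) ≤ 𝓝[<] 1 := Ultrafilter.of_le _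
  have h𝓕1 : (𝓕 : Filter ℝ) ≤ 𝓝 1 := h𝓕.trans nhdsWithin_le_nhds
  have h𝓕m : Ioo s₀ 1 ∈ 𝓕 := h𝓕 (Ioo_mem_nhdsLT hs1)
  have hQ : QQ 𝓕 v Ω := QQ_domain hN1 𝓕 hs0 h𝓕m hΩ v hvm hvI hC.le hE
  obtain ⟨w, hwm, hwl, hw0, hlim⟩ := exists_limit 𝓕 hΩo hne hΩt v hvm hvl hvmean hQ
  have hwI : IntegrableOn w Ω := (memLp_of_l2sq hwm hwl).integrable one_le_two
  have hH1 : memH1 N Ω w := memH1_of_DD hΩo hΩc hwm hwI hwl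
    (K := 16 * C) (by positivity) fun r hr =>
      DD_limit hN1 𝓕 h𝓕1 hs0 h𝓕m hΩt v hvm hwm hlim hC.le hE hr
  obtain ⟨sk, hmono, hmem, htend, hd⟩ := exists_seq (𝓕 : Filter ℝ) h𝓕 hlim hs1
  refine ⟨sk, hmono, hmem, htend, w, hH1, hw0, ?_⟩
  have h2 := (ENNReal.tendsto_toReal ENNReal.zero_ne_top).comp hd
  rw [ENNReal.toReal_zero] at h2
  refine h2.congr fun k => ?_
  simp only [Function.comp_apply, d2]
  rw [← integral_eq_lintegral_of_nonneg_ae (ae_of_all _ fun x => by positivity)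
    (by have := hvm (sk k); exact ((this.sub hwm).pow_const 2).aestronglyMeasurable)]
  apply integral_congr_ae
  filter_upwards [(hut _ (hmem k)).2.1] with x hx
  rw [hv1 _ (hmem k), hx]

end FracNeumann
end
end
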